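/- arXiv:2109.05657 — 3 statements merged into one kernel-verified Lean document; each statement's English description precedes it below -/
import Mathlib

section
/- Let 𝒞 be a triangulated category with shift functor Σ and let M be a silting object of 𝒞. Then 𝒞 = ⋃_{n ∈ ℕ} Σ^{-n}add(M) ∗ Σ^{-n+1}add(M) ∗ ⋯ ∗ Σ^{n}add(M); that is, every object of 𝒞 lies in Σ^{-n}add(M) ∗ Σ^{-n+1}add(M) ∗ ⋯ ∗ Σ^{n}add(M) for some n ∈ ℕ. -/
/-!
The theorem is proved without the octahedral axiom: only a pretriangulated structure is
available, so the product `∗` is not known to be associative, and closure of the union of the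
sets `Σ⁻ⁿ add M ∗ ⋯ ∗ Σⁿ add M` under extensions is not proved directly. Instead each object is
resolved by successive approximations.

Say that `W` is concentrated in degrees `≥ i` (`AtLeast M i W`) if `Hom(M⟦j⟧, W) = 0` for `j < i`.
Three facts hold for every object `T`, each because it defines a class of objects which is closed
under retracts and extensions and contains all the `M⟦k⟧` (`IsSilting.induction`):

* `T` is concentrated in degrees `≥ i` for some `i` (`exists_atLeast`);
* for some `N`, all maps from `T` to objects in degrees `≥ N` vanish (`exists_leftBound`);
* any map `T ⟶ W` with `W` in degrees `≥ i` is killed by a finite sequence of cell attachments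
  `W ⟶ W₁ ⟶ ⋯ ⟶ Wₛ`, i.e. of cones of maps `M⟦j⟧ ⟶ Wₖ` with `j ≥ i` (`exists_cells`). For an
  extension, one first kills the restriction to the subobject, then the induced map on the quotient.

On `Hom(M⟦i⟧, -)`, attaching a cell of degree `j ≥ i` is surjective with kernel generated by at
most one element, as `Hom(M⟦i⟧, M⟦j + 1⟧) = 0`. Applying the third fact to the identity of an
object `Z` in degrees `≥ i` therefore shows that `Hom(M⟦i⟧, Z)` is finitely generated over `End M`:
there is `A ⟶ Z` with `A` in `Σⁱ add M` through which every `M⟦i⟧ ⟶ Z` factors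
(`exists_approx`). Its cone is in degrees `≥ i + 1`, and iterating, the second fact shows that the
process ends with an object which is a retract of its own approximation (`mem_starList`).
-/

open CategoryTheory Limits Pretriangulated

namespace Silting

variable {C : Type*} [Category C] [HasZeroObject C] [Preadditive C] [HasShift C ℤ]
  [∀ n : ℤ, (shiftFunctor C n).Additive] [Pretriangulated C]

/-- `X ∈ addOf M` iff `X` is a direct summand of a finite direct sum of copies of `M`. -/
def addOf (M : C) : Set C :=
  {X | ∃ (n : ℕ) (f : Fin n → (X ⟶ M)) (g : Fin n → (M ⟶ X)), (∑ i, f i ≫ g i) = 𝟙 X}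

/-- `𝒳 ∗ 𝒴`: objects `Z` admitting a distinguished triangle `X ⟶ Z ⟶ Y ⟶ X⟦1⟧`
with `X ∈ 𝒳` and `Y ∈ 𝒴`. -/
def star (S₁ S₂ : Set C) : Set C :=
  {Z | ∃ (X Y : C) (f : X ⟶ Z) (g : Z ⟶ Y) (h : Y ⟶ X⟦(1 : ℤ)⟧),
    (Triangle.mk f g h ∈ distTriang C) ∧ X ∈ S₁ ∧ Y ∈ S₂}

/-- Iterated star product `S₁ ∗ S₂ ∗ ⋯ ∗ Sₖ` of a list of subcategories (the empty
product consists of the zero objects). -/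
def starList : List (Set C) → Set C
  | [] => {X | IsZero X}
  | S :: L => star S (starList L)

/-- `Σᵏ 𝒮`, the shift of a subcategory by `k` (closed under isomorphism). -/
def shiftSet (S : Set C) (k : ℤ) : Set C :=
  {X | ∃ Y ∈ S, Nonempty (X ≅ Y⟦k⟧)}

/-- A thick subcategory: a triangulated subcategory closed under direct summands. -/
structure IsThick (S : Set C) : Prop where
  mem_of_iso : ∀ ⦃X Y : C⦄, (X ≅ Y) → X ∈ S → Y ∈ S
  zero_mem : ∀ (X : C), IsZero X → X ∈ S
  shift_mem : ∀ X ∈ S, ∀ (k : ℤ), X⟦k⟧ ∈ S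
  ext_mem : ∀ (X Y Z : C) (f : X ⟶ Y) (g : Y ⟶ Z) (h : Z ⟶ X⟦(1 : ℤ)⟧),
    (Triangle.mk f g h ∈ distTriang C) → X ∈ S → Z ∈ S → Y ∈ S
  retract_mem : ∀ (X Y : C), X ∈ S → ∀ (i : Y ⟶ X) (p : X ⟶ Y), i ≫ p = 𝟙 Y → Y ∈ S

/-- The smallest thick subcategory containing `M`. -/
def thickOf (M : C) : Set C :=
  {X | ∀ S : Set C, IsThick S → M ∈ S → X ∈ S}

/-- A silting object: no positive self-extensions, and it generates the whole
category as a thick subcategory. -/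
structure IsSilting (M : C) : Prop where
  presilting : ∀ (i : ℤ), 0 < i → ∀ f : M ⟶ M⟦i⟧, f = 0
  generates : ∀ X : C, X ∈ thickOf M

/-! ### Hom-exactness and the silting condition -/

lemma exact₂ {X Y Z : C} {a : X ⟶ Y} {g : Y ⟶ Z} {h : Z ⟶ X⟦(1 : ℤ)⟧}
    (hT : Triangle.mk a g h ∈ distTriang C) {W : C} (f : W ⟶ Y) (hf : f ≫ g = 0) :
    ∃ u : W ⟶ X, f = u ≫ a :=
  Triangle.coyoneda_exact₂ _ hT f hf

lemma exact₃ {X Y Z : C} {a : X ⟶ Y} {g : Y ⟶ Z} {h : Z ⟶ X⟦(1 : ℤ)⟧}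
    (hT : Triangle.mk a g h ∈ distTriang C) {W : C} (f : W ⟶ Z) (hf : f ≫ h = 0) :
    ∃ u : W ⟶ Y, f = u ≫ g :=
  Triangle.coyoneda_exact₃ _ hT f hf

lemma IsSilting.hom_shift_eq_zero {M : C} (hM : IsSilting M) {i j : ℤ} (hij : i < j)
    (f : M⟦i⟧ ⟶ M⟦j⟧) : f = 0 := by
  let e : M⟦j⟧ ≅ (M⟦j - i⟧)⟦i⟧ := (shiftFunctorAdd' C (j - i) i j (by omega)).app M
  obtain ⟨g, hg⟩ := (shiftFunctor C i).map_surjective (f ≫ e.hom)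
  have h0 : f ≫ e.hom = 0 := by
    rw [← hg, hM.presilting (j - i) (by omega) g, Functor.map_zero]
  rw [← cancel_mono e.hom, h0, zero_comp]

lemma IsSilting.hom_shift_shift_one_eq_zero {M : C} (hM : IsSilting M) {i j : ℤ} (hij : i ≤ j)
    (f : M⟦i⟧ ⟶ (M⟦j⟧)⟦(1 : ℤ)⟧) : f = 0 := by
  let e : M⟦j + 1⟧ ≅ (M⟦j⟧)⟦(1 : ℤ)⟧ := (shiftFunctorAdd C j 1).app M
  rw [← cancel_mono e.inv, zero_comp]
  exact hM.hom_shift_eq_zero (by omega) _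

/-- A property of objects which is inherited by retracts and extensions and holds for zero objects
and all shifts of a silting object holds everywhere. It need not be invariant under shifts. -/
lemma IsSilting.induction {M : C} (hM : IsSilting M) (G : C → Prop)
    (zero : ∀ X, IsZero X → G X)
    (retract : ∀ X Y : C, G X → ∀ (i : Y ⟶ X) (p : X ⟶ Y), i ≫ p = 𝟙 Y → G Y)
    (ext : ∀ (T : Triangle C), T ∈ distTriang C → G T.obj₁ → G T.obj₃ → G T.obj₂)
    (base : ∀ k : ℤ, G (M⟦k⟧)) (Z : C) : G Z := by
  have iso : ∀ {X Y : C}, (X ≅ Y) → G X → G Y := fun e h => retract _ _ h e.inv e.hom (by simp)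
  have key : Z ∈ {T : C | ∀ k : ℤ, G (T⟦k⟧)} := by
    refine hM.generates Z _ ⟨?_, ?_, ?_, ?_, ?_⟩ base
    · intro X Y e hX k
      exact iso ((shiftFunctor C k).mapIso e) (hX k)
    · intro X hX k
      exact zero _ ((shiftFunctor C k).map_isZero hX)
    · intro X hX k l
      exact iso ((shiftFunctorAdd C k l).app X) (hX (k + l))
    · intro X Y Z f g h hT hX hZ k
      exact ext _ (Triangle.shift_distinguished _ hT k) (hX k) (hZ k)
    · intro X Y hX i p hip k
      exact retract _ _ (hX k) (i⟦k⟧') (p⟦k⟧') (by rw [← Functor.map_comp, hip, CategoryTheory.Functor.map_id])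
  exact iso ((shiftFunctorZero C ℤ).app Z) (key 0)

/-! ### Degree bounds -/

/-- `W` is concentrated in degrees `≥ i`: every map `M⟦j⟧ ⟶ W` with `j < i` vanishes. -/
def AtLeast (M : C) (i : ℤ) (W : C) : Prop :=
  ∀ j < i, ∀ f : M⟦j⟧ ⟶ W, f = 0

lemma AtLeast.mono {M : C} {i j : ℤ} {W : C} (hW : AtLeast M i W) (h : j ≤ i) :
    AtLeast M j W := fun k hk f => hW k (by omega) f

lemma AtLeast.ext {M : C} {i : ℤ} {T : Triangle C} (hT : T ∈ distTriang C)
    (h₁ : AtLeast M i T.obj₁) (h₃ : AtLeast M i T.obj₃) : AtLeast M i T.obj₂ := by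
  intro j hj f
  obtain ⟨g, rfl⟩ := Triangle.coyoneda_exact₂ T hT f (h₃ j hj _)
  rw [h₁ j hj g, zero_comp]

lemma exists_atLeast {M : C} (hM : IsSilting M) (Z : C) : ∃ i, AtLeast M i Z := by
  refine hM.induction (fun T => ∃ i, AtLeast M i T) ?_ ?_ ?_ ?_ Z
  · exact fun X hX => ⟨0, fun j _ f => hX.eq_of_tgt _ _⟩
  · rintro X Y ⟨i, hi⟩ s p hsp
    refine ⟨i, fun j hj f => ?_⟩
    rw [← Category.comp_id f, ← hsp, ← Category.assoc, hi j hj (f ≫ s), zero_comp]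
  · rintro T hT ⟨i, hi⟩ ⟨j, hj⟩
    exact ⟨min i j, AtLeast.ext hT (hi.mono (min_le_left _ _)) (hj.mono (min_le_right _ _))⟩
  · exact fun k => ⟨k, fun j hj f => hM.hom_shift_eq_zero hj f⟩

/-- All maps from `T` to objects in degrees `≥ N` vanish. -/
def LeftBound (M : C) (N : ℤ) (T : C) : Prop :=
  ∀ W, AtLeast M N W → ∀ f : T ⟶ W, f = 0

lemma LeftBound.mono {M : C} {N N' : ℤ} {T : C} (hT : LeftBound M N T) (h : N ≤ N') :
    LeftBound M N' T := fun W hW f => hT W (hW.mono h) f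

lemma LeftBound.ext {M : C} {N : ℤ} {T : Triangle C} (hT : T ∈ distTriang C)
    (h₁ : LeftBound M N T.obj₁) (h₃ : LeftBound M N T.obj₃) : LeftBound M N T.obj₂ := by
  intro W hW f
  obtain ⟨g, rfl⟩ := Triangle.yoneda_exact₂ T hT f (h₁ W hW _)
  rw [h₃ W hW g, comp_zero]

lemma exists_leftBound {M : C} (hM : IsSilting M) (Z : C) : ∃ N, LeftBound M N Z := by
  refine hM.induction (fun T => ∃ N, LeftBound M N T) ?_ ?_ ?_ ?_ Z
  · exact fun X hX => ⟨0, fun W _ f => hX.eq_of_src _ _⟩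
  · rintro X Y ⟨N, hN⟩ s p hsp
    refine ⟨N, fun W hW f => ?_⟩
    rw [← Category.id_comp f, ← hsp, Category.assoc, hN W hW (p ≫ f), comp_zero]
  · rintro T hT ⟨i, hi⟩ ⟨j, hj⟩
    exact ⟨max i j, LeftBound.ext hT (hi.mono (le_max_left _ _)) (hj.mono (le_max_right _ _))⟩
  · exact fun k => ⟨k + 1, fun W hW f => hW k (by omega) f⟩

/-! ### Cell attachments -/

/-- `Cells M i g` says that `g : W ⟶ W'` is a finite composition of cell attachments, a cell
attachment being the map `W ⟶ W₁` to the cone of a map `M⟦j⟧ ⟶ W` with `i ≤ j`. -/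
inductive Cells (M : C) (i : ℤ) : ∀ {W W' : C}, (W ⟶ W') → Prop
  | id (W : C) : Cells M i (𝟙 W)
  | step {W W₁ W' : C} (j : ℤ) (hj : i ≤ j) (a : M⟦j⟧ ⟶ W) (g : W ⟶ W₁)
      (h : W₁ ⟶ (M⟦j⟧)⟦(1 : ℤ)⟧) (hT : Triangle.mk a g h ∈ distTriang C) (g' : W₁ ⟶ W')
      (hg' : Cells M i g') : Cells M i (g ≫ g')

lemma Cells.comp {M : C} {i : ℤ} {W W' W'' : C} {g : W ⟶ W'} (hg : Cells M i g)
    {g' : W' ⟶ W''} (hg' : Cells M i g') : Cells M i (g ≫ g') := by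
  induction hg with
  | id W => simpa using hg'
  | step j hj a g h hT k _ ih =>
    rw [Category.assoc]
    exact Cells.step j hj a g h hT _ (ih hg')

lemma Cells.atLeast {M : C} (hM : IsSilting M) {i : ℤ} {W W' : C} {g : W ⟶ W'}
    (hg : Cells M i g) (hW : AtLeast M i W) : AtLeast M i W' := by
  induction hg with
  | id W => exact hW
  | step j hj a g h hT k _ ih =>
    refine ih fun l hl f => ?_
    obtain ⟨u, rfl⟩ := exact₃ hT f
      (hM.hom_shift_shift_one_eq_zero (by omega) _)
    rw [hW l hl u, zero_comp]

lemma exists_cells {M : C} (hM : IsSilting M) (T : C) :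
    ∀ (i : ℤ) (W : C), AtLeast M i W → ∀ t : T ⟶ W,
      ∃ (W' : C) (g : W ⟶ W'), Cells M i g ∧ t ≫ g = 0 := by
  refine hM.induction (fun T => ∀ (i : ℤ) (W : C), AtLeast M i W → ∀ t : T ⟶ W,
      ∃ (W' : C) (g : W ⟶ W'), Cells M i g ∧ t ≫ g = 0) ?_ ?_ ?_ ?_ T
  · exact fun X hX i W _ t => ⟨W, 𝟙 W, .id W, hX.eq_of_src _ _⟩
  · intro X Y hX s p hsp i W hW t
    obtain ⟨W', g, hg, h⟩ := hX i W hW (p ≫ t)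
    refine ⟨W', g, hg, ?_⟩
    rw [← Category.id_comp t, ← hsp, Category.assoc, Category.assoc, ← Category.assoc p, h,
      comp_zero]
  · intro T hT h₁ h₃ i W hW t
    obtain ⟨W₁, g, hg, h⟩ := h₁ i W hW (T.mor₁ ≫ t)
    obtain ⟨u, hu⟩ := Triangle.yoneda_exact₂ T hT (t ≫ g) (by rw [← Category.assoc, h])
    obtain ⟨W₂, g', hg', h'⟩ := h₃ i W₁ (hg.atLeast hM hW) u
    exact ⟨W₂, g ≫ g', hg.comp hg', by rw [← Category.assoc, hu, Category.assoc, h', comp_zero]⟩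
  · intro k i W hW t
    by_cases hk : k < i
    · exact ⟨W, 𝟙 W, .id W, by rw [hW k hk t, zero_comp]⟩
    · obtain ⟨W', g, h, hT⟩ := distinguished_cocone_triangle t
      exact ⟨W', g ≫ 𝟙 W', .step k (by omega) t g h hT _ (.id W'), by
        rw [Category.comp_id]
        exact comp_distTriang_mor_zero₁₂ _ hT⟩

/-! ### Approximations by objects of `Σⁱ add M` -/

/-- `A` is a direct summand of a finite direct sum of copies of `M⟦i⟧`. -/
def AddShift (M : C) (i : ℤ) (A : C) : Prop :=
  ∃ (n : ℕ) (f : Fin n → (A ⟶ M⟦i⟧)) (g : Fin n → (M⟦i⟧ ⟶ A)), (∑ k, f k ≫ g k) = 𝟙 A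

lemma AddShift.mem_shiftSet {M : C} {i : ℤ} {A : C} (hA : AddShift M i A) :
    A ∈ shiftSet (addOf M) i := by
  obtain ⟨n, f, g, h⟩ := hA
  let e : (M⟦i⟧)⟦-i⟧ ≅ M := (shiftFunctorCompIsoId C i (-i) (by omega)).app M
  refine ⟨A⟦-i⟧, ⟨n, fun k => (f k)⟦-i⟧' ≫ e.hom, fun k => e.inv ≫ (g k)⟦-i⟧', ?_⟩,
    ⟨((shiftFunctorCompIsoId C (-i) i (by omega)).app A).symm⟩⟩
  simp only [Category.assoc, Iso.hom_inv_id_assoc, ← Functor.map_comp]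
  rw [← Functor.map_sum, h, CategoryTheory.Functor.map_id]

lemma AddShift.hom_eq_zero {M : C} {i : ℤ} {A W : C} (hA : AddShift M i A)
    (hW : ∀ f : M⟦i⟧ ⟶ W, f = 0) (f : A ⟶ W) : f = 0 := by
  obtain ⟨n, u, v, h⟩ := hA
  rw [← Category.id_comp f, ← h, Preadditive.sum_comp]
  exact Finset.sum_eq_zero fun k _ => by rw [Category.assoc, hW (v k ≫ f), comp_zero]

lemma AddShift.retract {M : C} {i : ℤ} {A B : C} (hA : AddShift M i A) (s : B ⟶ A) (p : A ⟶ B)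
    (h : s ≫ p = 𝟙 B) : AddShift M i B := by
  obtain ⟨n, u, v, huv⟩ := hA
  refine ⟨n, fun k => s ≫ u k, fun k => v k ≫ p, ?_⟩
  have : ∀ k, (s ≫ u k) ≫ v k ≫ p = s ≫ (u k ≫ v k) ≫ p := by simp
  simp only [this]
  rw [← Preadditive.comp_sum, ← Preadditive.sum_comp, huv, Category.id_comp, h]

lemma AddShift.zero (M : C) (i : ℤ) {X : C} (hX : IsZero X) : AddShift M i X :=
  ⟨0, Fin.elim0, Fin.elim0, hX.eq_of_src _ _⟩

lemma AddShift.biprod {M : C} {i : ℤ} {A : C} (hA : AddShift M i A) :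
    AddShift M i (M⟦i⟧ ⊞ A) := by
  obtain ⟨n, u, v, huv⟩ := hA
  refine ⟨n + 1, Fin.cons biprod.fst fun k => biprod.snd ≫ u k,
    Fin.cons biprod.inl fun k => v k ≫ biprod.inr, ?_⟩
  have : ∀ k, ((biprod.snd : M⟦i⟧ ⊞ A ⟶ A) ≫ u k) ≫ v k ≫ (biprod.inr : A ⟶ M⟦i⟧ ⊞ A) =
      biprod.snd ≫ (u k ≫ v k) ≫ biprod.inr := by simp
  simp only [Fin.sum_univ_succ, Fin.cons_zero, Fin.cons_succ, this]
  rw [← Preadditive.comp_sum, ← Preadditive.sum_comp, huv, Category.id_comp, biprod.total]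

open scoped ZeroObject in
/-- The kernel of the map induced on `Hom(M⟦i⟧, -)` by a finite sequence of attachments of cells of
degrees `≥ i` is finitely generated over `End M`. -/
lemma Cells.exists_kernel_generators {M : C} (hM : IsSilting M) {i : ℤ} {W W' : C} {g : W ⟶ W'}
    (hg : Cells M i g) : ∃ (A : C) (a : A ⟶ W), AddShift M i A ∧
      ∀ m : M⟦i⟧ ⟶ W, m ≫ g = 0 → ∃ u, m = u ≫ a := by
  induction hg with
  | id W => exact ⟨0, 0, .zero M i (isZero_zero C), fun m hm => ⟨0, by simpa using hm⟩⟩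
  | step j hj b g h hT g' _ ih =>
    obtain ⟨A, a, hA, hker⟩ := ih
    obtain ⟨l, hl⟩ := exact₃ hT a
      (hA.hom_eq_zero (fun f => hM.hom_shift_shift_one_eq_zero hj f) _)
    -- Up to the lift `l` of the generators for `g'`, a kernel element comes from the cell `b`.
    have split : ∀ m : M⟦i⟧ ⟶ _, m ≫ g ≫ g' = 0 → ∃ u v, m = u ≫ l + v ≫ b := by
      intro m hm
      obtain ⟨u, hu⟩ := hker (m ≫ g) (by simpa using hm)
      obtain ⟨v, hv⟩ := exact₂ hT (m - u ≫ l) (by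
        rw [Preadditive.sub_comp, hu, hl, Category.assoc, sub_self])
      exact ⟨u, v, by rw [← sub_eq_iff_eq_add', hv]⟩
    rcases hj.lt_or_eq with hj | rfl
    · refine ⟨A, l, hA, fun m hm => ?_⟩
      obtain ⟨u, v, h⟩ := split m hm
      exact ⟨u, by rw [h, hM.hom_shift_eq_zero hj v, zero_comp, add_zero]⟩
    · refine ⟨_, biprod.desc b l, hA.biprod, fun m hm => ?_⟩
      obtain ⟨u, v, h⟩ := split m hm
      exact ⟨biprod.lift v u, by rw [h, biprod.lift_desc, add_comm]⟩

/-- `Hom(M⟦i⟧, Z)` is finitely generated over `End M` if `Z` is in degrees `≥ i`. -/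
lemma exists_approx {M : C} (hM : IsSilting M) {i : ℤ} {Z : C} (hZ : AtLeast M i Z) :
    ∃ (A : C) (a : A ⟶ Z), AddShift M i A ∧ ∀ m : M⟦i⟧ ⟶ Z, ∃ u, m = u ≫ a := by
  obtain ⟨W, g, hg, h⟩ := exists_cells hM Z i Z hZ (𝟙 Z)
  obtain ⟨A, a, hA, hker⟩ := hg.exists_kernel_generators hM
  refine ⟨A, a, hA, fun m => hker m ?_⟩
  rw [← Category.id_comp g, h, comp_zero]

/-- The cone of an approximation in degree `i` is in degrees `≥ i + 1`. -/
lemma atLeast_cone {M : C} (hM : IsSilting M) {i : ℤ} {A Z Z₁ : C} (hZ : AtLeast M i Z)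
    (hA : AddShift M i A) {a : A ⟶ Z} {g : Z ⟶ Z₁} {h : Z₁ ⟶ A⟦(1 : ℤ)⟧}
    (hT : Triangle.mk a g h ∈ distTriang C) (ha : ∀ m : M⟦i⟧ ⟶ Z, ∃ u, m = u ≫ a) :
    AtLeast M (i + 1) Z₁ := by
  obtain ⟨n, u, v, huv⟩ := hA
  intro j hj f
  have hf : f ≫ h = 0 := by
    have hid : 𝟙 (A⟦(1 : ℤ)⟧) = ∑ k, (u k)⟦(1 : ℤ)⟧' ≫ (v k)⟦(1 : ℤ)⟧' := by
      simp only [← Functor.map_comp]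
      rw [← Functor.map_sum, huv, CategoryTheory.Functor.map_id]
    rw [← Category.comp_id (f ≫ h), hid, Preadditive.comp_sum]
    refine Finset.sum_eq_zero fun k _ => ?_
    rw [← Category.assoc, hM.hom_shift_shift_one_eq_zero (by omega) ((f ≫ h) ≫ _), zero_comp]
  obtain ⟨m, rfl⟩ := exact₃ hT f hf
  rcases (show j ≤ i by omega).lt_or_eq with hj | rfl
  · rw [hZ j hj m, zero_comp]
  · obtain ⟨w, rfl⟩ := ha m
    have : a ≫ g = 0 := comp_distTriang_mor_zero₁₂ _ hT
    rw [Category.assoc, this, comp_zero]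

/-- The cone of `A ⟶ Z` with `A` in `Σⁱ add M` keeps a left bound `N` of `Z` if `i + 1 < N`. -/
lemma leftBound_cone {M : C} {i N : ℤ} (hN : i + 1 < N) {A Z Z₁ : C} (hZ : LeftBound M N Z)
    (hA : AddShift M i A) {a : A ⟶ Z} {g : Z ⟶ Z₁} {h : Z₁ ⟶ A⟦(1 : ℤ)⟧}
    (hT : Triangle.mk a g h ∈ distTriang C) : LeftBound M N Z₁ := by
  refine LeftBound.ext (rot_of_distTriang _ hT) hZ ?_
  intro W hW f
  change A⟦(1 : ℤ)⟧ ⟶ W at f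
  obtain ⟨n, u, v, huv⟩ := hA
  have hA' : AddShift M (i + 1) (A⟦(1 : ℤ)⟧) := by
    let e : M⟦i + 1⟧ ≅ (M⟦i⟧)⟦(1 : ℤ)⟧ := (shiftFunctorAdd C i 1).app M
    refine ⟨n, fun k => (u k)⟦(1 : ℤ)⟧' ≫ e.inv, fun k => e.hom ≫ (v k)⟦(1 : ℤ)⟧', ?_⟩
    simp only [Category.assoc, Iso.inv_hom_id_assoc, ← Functor.map_comp]
    rw [← Functor.map_sum, huv, CategoryTheory.Functor.map_id]
  exact hA'.hom_eq_zero (hW (i + 1) hN) f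

open scoped ZeroObject in
/-- An object in degrees `≥ i` with left bound `i + L + 1` lies in
`Σⁱ add M ∗ ⋯ ∗ Σⁱ⁺ᴸ add M`. -/
lemma mem_starList {M : C} (hM : IsSilting M) (L : ℕ) : ∀ (i : ℤ) (Z : C), AtLeast M i Z →
    LeftBound M (i + L + 1) Z →
    Z ∈ starList ((List.range (L + 1)).map fun k : ℕ => shiftSet (addOf M) (i + (k : ℤ))) := by
  induction L with
  | zero =>
    intro i Z hZ hZ'
    obtain ⟨A, a, hA, ha⟩ := exists_approx hM hZ
    obtain ⟨Z₁, g, h, hT⟩ := distinguished_cocone_triangle a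
    have hg : g = 0 := hZ' _ (by simpa using atLeast_cone hM hZ hA hT ha) g
    obtain ⟨s, hs⟩ := exact₂ hT (𝟙 Z) (by rw [hg, comp_zero])
    have hZA : AddShift M i Z := hA.retract s a hs.symm
    refine ⟨Z, 0, 𝟙 Z, 0, 0, contractible_distinguished Z, ?_, isZero_zero C⟩
    simpa using hZA.mem_shiftSet
  | succ L ih =>
    intro i Z hZ hZ'
    obtain ⟨A, a, hA, ha⟩ := exists_approx hM hZ
    obtain ⟨Z₁, g, h, hT⟩ := distinguished_cocone_triangle a
    have h₁ := ih (i + 1) Z₁ (atLeast_cone hM hZ hA hT ha)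
      ((leftBound_cone (by omega) hZ' hA hT).mono (by push_cast; omega))
    rw [List.range_succ_eq_map, List.map_cons, List.map_map]
    refine ⟨A, Z₁, a, g, h, hT, by simpa using hA.mem_shiftSet, ?_⟩
    convert h₁ using 3
    funext k
    simp only [Function.comp_apply, Nat.succ_eq_add_one]
    congr 1
    push_cast
    ring

/-- if `M` is silting, every object lies in
`Σ⁻ⁿ add M ∗ ⋯ ∗ Σⁿ add M` for some `n`. -/
theorem silting_generates_in_finitely_many_steps (M : C) (hM : IsSilting M) (Z : C) :
    ∃ n : ℕ, Z ∈ starList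
      (((List.range (2 * n + 1)).map fun i => shiftSet (addOf M) ((i : ℤ) - (n : ℤ)))) := by
  obtain ⟨i, hi⟩ := exists_atLeast hM Z
  obtain ⟨N, hN⟩ := exists_leftBound hM Z
  refine ⟨i.natAbs + N.natAbs, ?_⟩
  have h := mem_starList hM (2 * (i.natAbs + N.natAbs)) (-((i.natAbs + N.natAbs : ℕ) : ℤ)) Z
    (hi.mono (by omega)) (hN.mono (by omega))
  convert h using 1
  -- The list in the goal is the image in `ℤ` of `List.range`, written with the monad structure of lists.
  simp only [List.bind_eq_flatMap, List.pure_def, ← List.map_eq_flatMap, List.map_map]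
  congr 2
  funext k
  simp only [Function.comp_apply]
  congr 1
  ring

end Silting
end

section
/- Let 𝒞 be a triangulated category with shift functor Σ, let M and N be silting objects of 𝒞, and let n ≥ 1. Then N ∈ add(M) ∗ Σ add(M) ∗ ⋯ ∗ Σ^{n-1} add(M) if and only if Σ^{n-1} M ∈ add(N) ∗ Σ add(N) ∗ ⋯ ∗ Σ^{n-1} add(N). -/
/-!
For a silting object `M`, an object `X` lies in `add M ∗ ⋯ ∗ Σⁿ⁻¹ add M` if and only if
`Hom(M, Σᵏ X) = 0` for all `k > 0` and `Hom(X, Σᵏ M) = 0` for all `k ≥ n` (`isNTermWrt_iff`).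
Applied to `(M, N)` and to `(N, Σⁿ⁻¹ M)`, this criterion gives the same two conditions with
their order exchanged, hence the symmetry.

The nontrivial half of the criterion peels off approximations: if `Hom(Σⁱ M, X) = 0` for `i < c`
there is `P ⟶ X` with `P ∈ add (Σᶜ M)` whose cone `Y` satisfies `Hom(Σⁱ M, Y) = 0` for `i ≤ c`
(`exists_approx`). The process stops because `X`, being in the thick closure of `M`, has no
morphisms to objects that are right orthogonal to enough shifts of `M` (`exists_bound`,
`homZero_of_perp`).

The existence of approximations amounts to finite generation of `Hom(Σᶜ M, X)` over the
endomorphism ring of `M`. The ambient category is only assumed pretriangulated, so the octahedral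
axiom and the associativity of `∗` are not available. Instead, every object is shown to
be a retract of one admitting, at each level, a weight decomposition `A ⟶ X'` whose left part
`A` is `Good`: maps from `A` to objects `Y` with `Hom(Σⁱ M, Y) = 0` for `i < c` factor through
`add (Σᶜ M)`. Goodness and the existence of such decompositions are inherited by the middle
terms of triangles (`Good.ext`, `HasDecomp.ext`), using only lifting of morphisms and four-lemma
arguments.
-/


open CategoryTheory Limits Pretriangulated

namespace Silting

variable {C : Type*} [Category C] [HasZeroObject C] [Preadditive C] [HasShift C ℤ]
  [∀ n : ℤ, (shiftFunctor C n).Additive] [Pretriangulated C]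

/-- `N` is `n`-term with respect to `M` if `N ∈ add M ∗ Σ add M ∗ ⋯ ∗ Σⁿ⁻¹ add M`. -/
def IsNTermWrt (n : ℕ) (M N : C) : Prop :=
  N ∈ starList ((List.range n).map fun i => shiftSet (addOf M) (i : ℤ))

set_option linter.unusedSectionVars false

/-! ### Exactness properties of a distinguished triangle -/

section Exactness

variable {K X Y Z : C} {f : X ⟶ Y} {g : Y ⟶ Z} {h : Z ⟶ X⟦(1 : ℤ)⟧}

lemma comp_zero₁₂ (hT : Triangle.mk f g h ∈ distTriang C) : f ≫ g = 0 :=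
  comp_distTriang_mor_zero₁₂ _ hT

lemma comp_zero₂₃ (hT : Triangle.mk f g h ∈ distTriang C) : g ≫ h = 0 :=
  comp_distTriang_mor_zero₂₃ _ hT

lemma comp_zero₃₁ (hT : Triangle.mk f g h ∈ distTriang C) : h ≫ f⟦(1 : ℤ)⟧' = 0 :=
  comp_distTriang_mor_zero₃₁ _ hT

lemma lift₁ (hT : Triangle.mk f g h ∈ distTriang C) (x : K ⟶ X⟦(1 : ℤ)⟧)
    (hx : x ≫ f⟦(1 : ℤ)⟧' = 0) : ∃ y : K ⟶ Z, x = y ≫ h :=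
  Triangle.coyoneda_exact₁ _ hT x hx

lemma lift₂ (hT : Triangle.mk f g h ∈ distTriang C) (x : K ⟶ Y) (hx : x ≫ g = 0) :
    ∃ y : K ⟶ X, x = y ≫ f :=
  Triangle.coyoneda_exact₂ _ hT x hx

lemma lift₃ (hT : Triangle.mk f g h ∈ distTriang C) (x : K ⟶ Z) (hx : x ≫ h = 0) :
    ∃ y : K ⟶ Y, x = y ≫ g :=
  Triangle.coyoneda_exact₃ _ hT x hx

lemma lift_shift (hT : Triangle.mk f g h ∈ distTriang C) (x : K ⟶ Y⟦(1 : ℤ)⟧)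
    (hx : x ≫ g⟦(1 : ℤ)⟧' = 0) : ∃ y : K ⟶ X⟦(1 : ℤ)⟧, x = y ≫ f⟦(1 : ℤ)⟧' := by
  obtain ⟨y, hy⟩ : ∃ y : K ⟶ X⟦(1 : ℤ)⟧, x = y ≫ (-f⟦(1 : ℤ)⟧') :=
    Triangle.coyoneda_exact₁ _ (rot_of_distTriang _ hT) x hx
  exact ⟨-y, by rw [hy, Preadditive.comp_neg, Preadditive.neg_comp]⟩

lemma desc₂ (hT : Triangle.mk f g h ∈ distTriang C) (x : Y ⟶ K) (hx : f ≫ x = 0) :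
    ∃ y : Z ⟶ K, x = g ≫ y :=
  Triangle.yoneda_exact₂ _ hT x hx

lemma desc₃ (hT : Triangle.mk f g h ∈ distTriang C) (x : Z ⟶ K) (hx : g ≫ x = 0) :
    ∃ y : X⟦(1 : ℤ)⟧ ⟶ K, x = h ≫ y :=
  Triangle.yoneda_exact₃ _ hT x hx

lemma fill₂ (hT : Triangle.mk f g h ∈ distTriang C) {X' Y' Z' : C} {f' : X' ⟶ Y'}
    {g' : Y' ⟶ Z'} {h' : Z' ⟶ X'⟦(1 : ℤ)⟧} (hT' : Triangle.mk f' g' h' ∈ distTriang C)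
    (a : X ⟶ X') (c : Z ⟶ Z') (hac : h ≫ a⟦(1 : ℤ)⟧' = c ≫ h') :
    ∃ b : Y ⟶ Y', f ≫ b = a ≫ f' ∧ g ≫ c = b ≫ g' :=
  complete_distinguished_triangle_morphism₂ _ _ hT hT' a c hac

lemma exists_extension (hT : Triangle.mk f g h ∈ distTriang C) (u : X ⟶ K)
    (hu : h ≫ u⟦(1 : ℤ)⟧' = 0) : ∃ v : Y ⟶ K, f ≫ v = u := by
  obtain ⟨v, hv, -⟩ := fill₂ hT (contractible_distinguished K) u 0 (by rw [hu, zero_comp])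
  exact ⟨v, by rw [hv, Category.comp_id]⟩

end Exactness

/-! ### Vanishing of morphism groups -/

/-- All morphisms from `X` to `Y` vanish. -/
def HomZero (X Y : C) : Prop := ∀ f : X ⟶ Y, f = 0

lemma HomZero.of_iso {X X' Y Y' : C} (h : HomZero X Y) (e : X ≅ X') (e' : Y ≅ Y') :
    HomZero X' Y' := by
  intro f
  have h0 := h (e.hom ≫ f ≫ e'.inv)
  have : f = e.inv ≫ (e.hom ≫ f ≫ e'.inv) ≫ e'.hom := by simp
  rw [this, h0, zero_comp, comp_zero]

lemma HomZero.shift {X Y : C} (h : HomZero X Y) (k : ℤ) : HomZero (X⟦k⟧) (Y⟦k⟧) := by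
  intro f
  obtain ⟨g, rfl⟩ := (shiftFunctor C k).map_surjective f
  rw [h g, Functor.map_zero]

/-- Whether `Hom(Σᵃ X, Σᵇ Y)` vanishes depends only on `a - b`. -/
lemma HomZero.shift_congr {X Y : C} {a b : ℤ} (h : HomZero (X⟦a⟧) (Y⟦b⟧)) (a' b' : ℤ)
    (hab : a + b' = a' + b) : HomZero (X⟦a'⟧) (Y⟦b'⟧) :=
  (h.shift (a' - a)).of_iso ((shiftFunctorAdd' C a (a' - a) a' (by lia)).app X).symm
    ((shiftFunctorAdd' C b (a' - a) b' (by lia)).app Y).symm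

lemma homZero_shift_zero_iff {X Y : C} {b : ℤ} :
    HomZero (X⟦(0 : ℤ)⟧) (Y⟦b⟧) ↔ HomZero X (Y⟦b⟧) :=
  ⟨fun h => h.of_iso ((shiftFunctorZero C ℤ).app X) (Iso.refl _),
    fun h => h.of_iso ((shiftFunctorZero C ℤ).app X).symm (Iso.refl _)⟩

lemma homZero_of_isZero_left {X : C} (h : IsZero X) (Y : C) : HomZero X Y :=
  fun f => h.eq_of_src f 0

lemma homZero_of_isZero_right {Y : C} (h : IsZero Y) (X : C) : HomZero X Y :=
  fun f => h.eq_of_tgt f 0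

/-! ### Finite direct sums and summands -/

lemma self_mem_addOf (Q : C) : Q ∈ addOf Q :=
  ⟨1, fun _ => 𝟙 Q, fun _ => 𝟙 Q, by simp⟩

lemma biprod_mem_addOf {Q P P' : C} [HasBinaryBiproduct P P'] (h : P ∈ addOf Q)
    (h' : P' ∈ addOf Q) : (P ⊞ P') ∈ addOf Q := by
  obtain ⟨n, f, g, hfg⟩ := h
  obtain ⟨n', f', g', hfg'⟩ := h'
  refine ⟨n + n', Fin.addCases (fun i => biprod.fst ≫ f i) (fun i => biprod.snd ≫ f' i),
    Fin.addCases (fun i => g i ≫ biprod.inl) (fun i => g' i ≫ biprod.inr), ?_⟩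
  rw [Fin.sum_univ_add]
  simp only [Fin.addCases_left, Fin.addCases_right]
  have h₁ : ∑ i, ((biprod.fst : P ⊞ P' ⟶ P) ≫ f i) ≫ g i ≫ (biprod.inl : P ⟶ P ⊞ P')
      = (biprod.fst : P ⊞ P' ⟶ P) ≫ (∑ i, f i ≫ g i) ≫ biprod.inl := by
    simp [Preadditive.sum_comp, Preadditive.comp_sum]
  have h₂ : ∑ i, ((biprod.snd : P ⊞ P' ⟶ P') ≫ f' i) ≫ g' i ≫ (biprod.inr : P' ⟶ P ⊞ P')
      = (biprod.snd : P ⊞ P' ⟶ P') ≫ (∑ i, f' i ≫ g' i) ≫ biprod.inr := by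
    simp [Preadditive.sum_comp, Preadditive.comp_sum]
  rw [h₁, h₂, hfg, hfg']
  simp

lemma retract_mem_addOf {Q P X : C} (h : P ∈ addOf Q) (i : X ⟶ P) (p : P ⟶ X)
    (hip : i ≫ p = 𝟙 X) : X ∈ addOf Q := by
  obtain ⟨n, f, g, hfg⟩ := h
  refine ⟨n, fun j => i ≫ f j, fun j => g j ≫ p, ?_⟩
  have : ∑ j, (i ≫ f j) ≫ g j ≫ p = i ≫ (∑ j, f j ≫ g j) ≫ p := by
    simp [Preadditive.sum_comp, Preadditive.comp_sum]
  rw [this, hfg]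
  simpa using hip

lemma addOf_iso {Q Q' X : C} (e : Q ≅ Q') (h : X ∈ addOf Q) : X ∈ addOf Q' := by
  obtain ⟨n, f, g, hfg⟩ := h
  exact ⟨n, fun j => f j ≫ e.hom, fun j => e.inv ≫ g j, by simpa using hfg⟩

lemma shift_mem_addOf {Q X : C} (h : X ∈ addOf Q) (k : ℤ) : X⟦k⟧ ∈ addOf (Q⟦k⟧) := by
  obtain ⟨n, f, g, hfg⟩ := h
  refine ⟨n, fun j => (f j)⟦k⟧', fun j => (g j)⟦k⟧', ?_⟩
  rw [← CategoryTheory.Functor.map_id, ← hfg, Functor.map_sum]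
  simp only [Functor.map_comp]

lemma shiftSet_addOf (M : C) (k : ℤ) : shiftSet (addOf M) k = addOf (M⟦k⟧) := by
  ext X
  constructor
  · rintro ⟨Y, hY, ⟨e⟩⟩
    exact retract_mem_addOf (shift_mem_addOf hY k) e.hom e.inv (by simp)
  · intro h
    refine ⟨X⟦-k⟧, addOf_iso ((shiftFunctorCompIsoId C k (-k) (by lia)).app M)
      (shift_mem_addOf h (-k)), ⟨((shiftFunctorCompIsoId C (-k) k (by lia)).app X).symm⟩⟩

lemma HomZero.to_addOf {K Q P : C} (h : HomZero K Q) (hP : P ∈ addOf Q) : HomZero K P := by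
  obtain ⟨n, f, g, hfg⟩ := hP
  intro u
  rw [← Category.comp_id u, ← hfg, Preadditive.comp_sum]
  refine Finset.sum_eq_zero fun i _ => ?_
  rw [← Category.assoc, h (u ≫ f i), zero_comp]

lemma HomZero.from_addOf {K Q P : C} (h : HomZero Q K) (hP : P ∈ addOf Q) : HomZero P K := by
  obtain ⟨n, f, g, hfg⟩ := hP
  intro u
  rw [← Category.id_comp u, ← hfg, Preadditive.sum_comp]
  refine Finset.sum_eq_zero fun i _ => ?_
  rw [Category.assoc, h (g i ≫ u), comp_zero]

/-! ### The right orthogonals of shifts of `M` -/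

/-- `Perp M c` consists of the objects `Y` with `Hom(Σⁱ M, Y) = 0` for all `i < c`. -/
def Perp (M : C) (c : ℤ) (Y : C) : Prop := ∀ i < c, HomZero (M⟦i⟧) Y

lemma Perp.mono {M Y : C} {c c' : ℤ} (h : Perp M c' Y) (hc : c ≤ c') : Perp M c Y :=
  fun i hi => h i (by lia)

lemma Perp.of_iso {M Y Y' : C} {c : ℤ} (h : Perp M c Y) (e : Y ≅ Y') : Perp M c Y' :=
  fun i hi => (h i hi).of_iso (Iso.refl _) e

lemma Perp.shift {M Y : C} {c : ℤ} (h : Perp M c Y) (k c' : ℤ) (hc : c + k = c') :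
    Perp M c' (Y⟦k⟧) := fun i hi =>
  ((h (i - k) (by lia)).shift k).of_iso
    ((shiftFunctorAdd' C (i - k) k i (by lia)).app M).symm (Iso.refl _)

lemma IsSilting.homZero {M : C} (hM : IsSilting M) {i j : ℤ} (hij : i < j) :
    HomZero (M⟦i⟧) (M⟦j⟧) := by
  have h : HomZero M (M⟦j - i⟧) := hM.presilting _ (by lia)
  exact (homZero_shift_zero_iff.2 h).shift_congr _ _ (by lia)

lemma IsSilting.perp {M : C} (hM : IsSilting M) {c k : ℤ} (hc : c ≤ k) : Perp M c (M⟦k⟧) :=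
  fun _ hi => hM.homZero (by lia)

lemma Perp.addOf {M P Q : C} {c : ℤ} (h : Perp M c Q) (hP : P ∈ addOf Q) : Perp M c P :=
  fun i hi => (h i hi).to_addOf hP

/-! ### Weight decompositions -/

/-- `Good M c A`: every map from `A` to an object of `Perp M (c + 1)` vanishes, and every map
from `A` to an object of `Perp M c` factors through `add (Σᶜ M)`. The second clause is what
makes the top cohomology of `A` finitely generated; both clauses pass to extensions without
the octahedral axiom. -/
structure Good (M : C) (c : ℤ) (A : C) : Prop where
  zero : ∀ Y, Perp M (c + 1) Y → HomZero A Y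
  factor : ∀ Y, Perp M c Y → ∀ f : A ⟶ Y, ∃ P ∈ addOf (M⟦c⟧), ∃ (u : A ⟶ P) (v : P ⟶ Y),
    f = u ≫ v

lemma good_of_forall_homZero {M A : C} {c : ℤ} (h : ∀ Y, Perp M c Y → HomZero A Y) :
    Good M c A where
  zero Y hY := h Y (hY.mono (by lia))
  factor Y hY f := ⟨M⟦c⟧, self_mem_addOf _, 0, 0, by rw [h Y hY f, zero_comp]⟩

lemma good_shift {M : C} {c k : ℤ} (hk : k ≤ c) : Good M c (M⟦k⟧) := by
  rcases hk.lt_or_eq with hk | rfl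
  · exact good_of_forall_homZero fun Y hY => hY k hk
  · exact
    { zero := fun Y hY => hY k (by lia)
      factor := fun Y hY f => ⟨_, self_mem_addOf _, 𝟙 _, f, by simp⟩ }

lemma Good.ext {M : C} (hM : IsSilting M) {c : ℤ} {X₁ X₂ X₃ : C} {α : X₁ ⟶ X₂}
    {β : X₂ ⟶ X₃} {γ : X₃ ⟶ X₁⟦(1 : ℤ)⟧} (hT : Triangle.mk α β γ ∈ distTriang C)
    (h₁ : Good M c X₁) (h₃ : Good M c X₃) : Good M c X₂ where
  zero Y hY f := by
    obtain ⟨g, rfl⟩ := desc₂ hT f (h₁.zero Y hY _)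
    rw [h₃.zero Y hY g, comp_zero]
  factor Y hY f := by
    obtain ⟨P, hP, u, v, huv⟩ := h₁.factor Y hY (α ≫ f)
    -- The obstruction to extending `u` along `α` is a map `X₃ ⟶ P⟦1⟧`.
    have hob : HomZero X₃ (P⟦(1 : ℤ)⟧) :=
      h₃.zero _ (((hM.perp le_rfl).addOf hP).shift 1 _ rfl)
    obtain ⟨u', hu'⟩ := exists_extension hT u (hob _)
    obtain ⟨g, hg⟩ := desc₂ hT (f - u' ≫ v)
      (by rw [Preadditive.comp_sub, huv, ← Category.assoc, hu', sub_self])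
    obtain ⟨P', hP', s, t, rfl⟩ := h₃.factor Y hY g
    refine ⟨P ⊞ P', biprod_mem_addOf hP hP', biprod.lift u' (β ≫ s), biprod.desc v t, ?_⟩
    rw [biprod.lift_desc, Category.assoc, ← hg]
    abel

/-- A weight decomposition of `X` at level `c`: a map `a : A ⟶ X` with `A` good whose cone lies
in `Perp M (c + 1)`. The condition on the cone is spelled out as surjectivity on
`Hom(Σⁱ M, -)` and injectivity on `Hom(Σⁱ M, Σ -)` for `i ≤ c`. -/
def HasDecomp (M : C) (c : ℤ) (X : C) : Prop :=
  ∃ (A : C) (a : A ⟶ X), Good M c A ∧ ∀ i ≤ c,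
    (∀ x : M⟦i⟧ ⟶ X, ∃ w, x = w ≫ a) ∧ ∀ v : M⟦i⟧ ⟶ A⟦(1 : ℤ)⟧, v ≫ a⟦1⟧' = 0 → v = 0

lemma Good.hasDecomp {M A : C} {c : ℤ} (h : Good M c A) : HasDecomp M c A :=
  ⟨A, 𝟙 A, h, fun i _ => ⟨fun x => ⟨x, by simp⟩, fun v hv => by simpa using hv⟩⟩

lemma Perp.hasDecomp {M X : C} {c : ℤ} (h : Perp M (c + 1) X) : HasDecomp M c X := by
  obtain ⟨A, hA⟩ := HasZeroObject.zero (C := C)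
  exact ⟨A, 0, good_of_forall_homZero fun Y _ => homZero_of_isZero_left hA Y,
    fun i hi => ⟨fun x => ⟨0, by rw [h i (by lia) x, zero_comp]⟩, fun v _ =>
      homZero_of_isZero_right ((shiftFunctor C (1 : ℤ)).map_isZero hA) _ v⟩⟩

lemma HasDecomp.of_iso {M X X' : C} {c : ℤ} (h : HasDecomp M c X) (e : X ≅ X') :
    HasDecomp M c X' := by
  obtain ⟨A, a, hA, h⟩ := h
  refine ⟨A, a ≫ e.hom, hA, fun i hi => ⟨fun x => ?_, fun v hv => ?_⟩⟩
  · obtain ⟨w, hw⟩ := (h i hi).1 (x ≫ e.inv)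
    exact ⟨w, by rw [← Category.assoc, ← hw]; simp⟩
  · refine (h i hi).2 v ?_
    have : v ≫ a⟦1⟧' = (v ≫ (a ≫ e.hom)⟦1⟧') ≫ e.inv⟦1⟧' := by
      rw [Functor.map_comp, Category.assoc, Category.assoc, ← Functor.map_comp]; simp
    rw [this, hv, zero_comp]

/-- Weight decompositions of the outer terms of a triangle induce one of the middle term: the
good parts are glued along a lift of the connecting map, and the conditions on the cone follow
from the long exact sequences as in the four lemma. -/
lemma HasDecomp.ext {M : C} (hM : IsSilting M) {c : ℤ} {X₁ X₂ X₃ : C}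
    {α : X₁ ⟶ X₂} {β : X₂ ⟶ X₃} {γ : X₃ ⟶ X₁⟦(1 : ℤ)⟧}
    (hT : Triangle.mk α β γ ∈ distTriang C) (h₁ : HasDecomp M c X₁) (h₃ : HasDecomp M c X₃) :
    HasDecomp M c X₂ := by
  obtain ⟨A₁, a₁, hA₁, h₁⟩ := h₁
  obtain ⟨A₃, a₃, hA₃, h₃⟩ := h₃
  obtain ⟨B, b, d, hB⟩ := distinguished_cocone_triangle a₁
  have hBp : Perp M (c + 1) B := by
    intro i hi x
    have hd : x ≫ d = 0 := (h₁ i (by lia)).2 _ (by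
      rw [Category.assoc, comp_zero₃₁ hB, comp_zero])
    obtain ⟨y, rfl⟩ := lift₃ hB x hd
    obtain ⟨w, rfl⟩ := (h₁ i (by lia)).1 y
    rw [Category.assoc, comp_zero₁₂ hB, comp_zero]
  have hB1 : HomZero A₃ (B⟦(1 : ℤ)⟧) :=
    hA₃.zero _ ((hBp.shift 1 _ rfl).mono (by lia))
  obtain ⟨u, hu⟩ : ∃ u : A₃ ⟶ A₁⟦(1 : ℤ)⟧, a₃ ≫ γ = u ≫ a₁⟦1⟧' :=
    lift_shift hB (a₃ ≫ γ) (hB1 _)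
  obtain ⟨A, j, p, hA⟩ := distinguished_cocone_triangle₂ u
  obtain ⟨φ, hφ₁, hφ₂⟩ := fill₂ hA hT a₁ a₃ hu.symm
  refine ⟨A, φ, Good.ext hM hA hA₁ hA₃, fun i hi => ⟨fun y => ?_, fun w hw => ?_⟩⟩
  · obtain ⟨z, hz⟩ := (h₃ i hi).1 (y ≫ β)
    have hzu : z ≫ u = 0 := (h₁ i hi).2 _ (by
      rw [Category.assoc, ← hu, ← Category.assoc, ← hz, Category.assoc,
        comp_zero₂₃ hT, comp_zero])
    obtain ⟨w, hw⟩ := lift₃ hA z hzu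
    obtain ⟨x, hx⟩ := lift₂ hT (y - w ≫ φ) (by
      rw [Preadditive.sub_comp, hz, Category.assoc, ← hφ₂, ← Category.assoc, ← hw, sub_self])
    obtain ⟨x', rfl⟩ := (h₁ i hi).1 x
    refine ⟨w + x' ≫ j, ?_⟩
    rw [Preadditive.add_comp, Category.assoc, hφ₁, ← Category.assoc, ← hx]
    abel
  · have hp : w ≫ p⟦1⟧' = 0 := (h₃ i hi).2 _ (by
      rw [Category.assoc, ← Functor.map_comp, hφ₂, Functor.map_comp, ← Category.assoc, hw,
        zero_comp])
    obtain ⟨v, rfl⟩ : ∃ v : M⟦i⟧ ⟶ A₁⟦(1 : ℤ)⟧, w = v ≫ j⟦1⟧' :=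
      lift_shift hA w hp
    obtain ⟨s, hs⟩ := lift₁ hT (v ≫ a₁⟦1⟧') (by
      rw [Category.assoc, ← Functor.map_comp, ← hφ₁, Functor.map_comp, ← Category.assoc, hw])
    obtain ⟨t, rfl⟩ := (h₃ i hi).1 s
    have hv : v = t ≫ u := by
      rw [← sub_eq_zero]
      refine (h₁ i hi).2 _ ?_
      rw [Preadditive.sub_comp, hs, Category.assoc, Category.assoc, hu, sub_self]
    rw [hv, Category.assoc, comp_zero₃₁ hA, comp_zero]

/-- Retracts of objects all of whose shifts have weight decompositions at every level. -/
def decompSet (M : C) : Set C :=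
  {X | ∃ X' : C, (∀ c k : ℤ, HasDecomp M c (X'⟦k⟧)) ∧
    ∃ (i : X ⟶ X') (p : X' ⟶ X), i ≫ p = 𝟙 X}

lemma isThick_decompSet {M : C} (hM : IsSilting M) : IsThick (decompSet M) where
  mem_of_iso := by
    rintro X Y e ⟨X', hX', i, p, hip⟩
    exact ⟨X', hX', e.inv ≫ i, p ≫ e.hom, by simp [reassoc_of% hip]⟩
  zero_mem X hX := ⟨X, fun c k => (good_of_forall_homZero fun Y _ =>
    homZero_of_isZero_left ((shiftFunctor C k).map_isZero hX) Y).hasDecomp, 𝟙 X, 𝟙 X, by simp⟩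
  shift_mem := by
    rintro X ⟨X', hX', i, p, hip⟩ k
    refine ⟨X'⟦k⟧, fun c l => (hX' c (k + l)).of_iso ((shiftFunctorAdd C k l).app X'),
      i⟦k⟧', p⟦k⟧', ?_⟩
    rw [← Functor.map_comp, hip, CategoryTheory.Functor.map_id]
  ext_mem := by
    rintro X Y Z f g h hT ⟨X', hX', i, p, hip⟩ ⟨Z', hZ', i', p', hip'⟩
    obtain ⟨Y', f', g', hT'⟩ := distinguished_cocone_triangle₂ (p' ≫ h ≫ i⟦1⟧')
    obtain ⟨α, hα₁, hα₂⟩ := fill₂ hT hT' i i'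
      (by rw [reassoc_of% hip'])
    obtain ⟨β, hβ₁, hβ₂⟩ := fill₂ hT' hT p p'
      (by rw [Category.assoc, Category.assoc, ← Functor.map_comp, hip]; simp)
    -- `α ≫ β` need not be the identity, but it is invertible by the five lemma.
    have e₁ : f ≫ α ≫ β = 𝟙 X ≫ f := by rw [reassoc_of% hα₁, hβ₁, reassoc_of% hip]; simp
    have e₂ : g ≫ 𝟙 Z = (α ≫ β) ≫ g := by
      rw [Category.assoc, ← hβ₂, ← reassoc_of% hα₂, hip']
    have e₃ : h ≫ (𝟙 X)⟦(1 : ℤ)⟧' = 𝟙 Z ≫ h := by simp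
    let ψ : Triangle.mk f g h ⟶ Triangle.mk f g h :=
      { hom₁ := 𝟙 X
        hom₂ := α ≫ β
        hom₃ := 𝟙 Z
        comm₁ := e₁
        comm₂ := e₂
        comm₃ := e₃ }
    have hψ : IsIso (α ≫ β) := isIso₂_of_isIso₁₃ ψ hT hT (IsIso.id X) (IsIso.id Z)
    refine ⟨Y', fun c k => ?_, α, β ≫ inv (α ≫ β), ?_⟩
    · exact HasDecomp.ext hM (Triangle.shift_distinguished _ hT' k) (hX' c k) (hZ' c k)
    · rw [← Category.assoc, IsIso.hom_inv_id]
  retract_mem := by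
    rintro X Y ⟨X', hX', i, p, hip⟩ j q hjq
    exact ⟨X', hX', j ≫ i, p ≫ q, by simp [reassoc_of% hip, hjq]⟩

lemma mem_decompSet {M : C} (hM : IsSilting M) (X : C) : X ∈ decompSet M := by
  refine hM.generates X _ (isThick_decompSet hM) ⟨M, fun c k => ?_, 𝟙 M, 𝟙 M, by simp⟩
  rcases le_or_gt k c with hk | hk
  · exact (good_shift hk).hasDecomp
  · exact (hM.perp (by lia : c + 1 ≤ k)).hasDecomp

/-! ### Approximations by `add (Σᶜ M)` -/

/-- An object of `Perp M c` has a right `add (Σᶜ M)`-approximation, and the cone of that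
approximation lies in `Perp M (c + 1)`. -/
lemma exists_approx_s1 {M : C} (hM : IsSilting M) {c : ℤ} {X : C} (hX : Perp M c X) :
    ∃ P ∈ addOf (M⟦c⟧), ∃ (Y : C) (f : P ⟶ X) (g : X ⟶ Y) (h : Y ⟶ P⟦(1 : ℤ)⟧),
      (Triangle.mk f g h ∈ distTriang C) ∧ Perp M (c + 1) Y := by
  obtain ⟨X', hX', j, q, hjq⟩ := mem_decompSet hM X
  obtain ⟨A, a, hA, hdec⟩ := (hX' c 0).of_iso ((shiftFunctorZero C ℤ).app X')
  obtain ⟨P, hP, u, v, huv⟩ := hA.factor X hX (a ≫ q)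
  have hsurj : ∀ x : M⟦c⟧ ⟶ X, ∃ y, x = y ≫ v := by
    intro x
    obtain ⟨w, hw⟩ := (hdec c le_rfl).1 (x ≫ j)
    refine ⟨w ≫ u, ?_⟩
    rw [Category.assoc, ← huv, ← Category.assoc, ← hw, Category.assoc, hjq, Category.comp_id]
  obtain ⟨Y, g, h, hT⟩ := distinguished_cocone_triangle v
  refine ⟨P, hP, Y, v, g, h, hT, fun i hi y => ?_⟩
  have hP1 : Perp M (c + 1) (P⟦(1 : ℤ)⟧) := ((hM.perp le_rfl).addOf hP).shift 1 _ rfl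
  obtain ⟨x, rfl⟩ := lift₃ hT y (hP1 i hi _)
  rcases (by lia : i < c ∨ i = c) with hi' | rfl
  · rw [hX i hi' x, zero_comp]
  · obtain ⟨z, rfl⟩ := hsurj x
    rw [Category.assoc, comp_zero₁₂ hT, comp_zero]

/-- Every object has no morphisms to `Perp M K` for `K` large. -/
lemma exists_bound {M : C} (hM : IsSilting M) (X : C) :
    ∃ K : ℤ, ∀ Y, Perp M K Y → HomZero X Y := by
  refine hM.generates X {X | ∃ K : ℤ, ∀ Y, Perp M K Y → HomZero X Y} ?_ ?_
  · refine ⟨?_, ?_, ?_, ?_, ?_⟩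
    · rintro X Y e ⟨K, hK⟩
      exact ⟨K, fun Z hZ => (hK Z hZ).of_iso e (Iso.refl _)⟩
    · exact fun X hX => ⟨0, fun Y _ => homZero_of_isZero_left hX Y⟩
    · rintro X ⟨K, hK⟩ k
      refine ⟨K + k, fun Y hY => ?_⟩
      exact ((hK _ (hY.shift (-k) K (by lia))).shift k).of_iso (Iso.refl _)
        ((shiftFunctorCompIsoId C (-k) k (by lia)).app Y)
    · rintro X Y Z f g h hT ⟨K, hK⟩ ⟨K', hK'⟩
      refine ⟨max K K', fun W hW u => ?_⟩
      obtain ⟨v, rfl⟩ := desc₂ hT u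
        (hK W (hW.mono (le_max_left _ _)) _)
      rw [hK' W (hW.mono (le_max_right _ _)) v]
      rw [comp_zero]
    · rintro X Y ⟨K, hK⟩ i p hip
      refine ⟨K, fun W hW u => ?_⟩
      rw [← Category.id_comp u, ← hip, Category.assoc, hK W hW (p ≫ u), comp_zero]
  · exact ⟨1, fun Y hY => (hY 0 (by lia)).of_iso ((shiftFunctorZero C ℤ).app M) (Iso.refl _)⟩

/-- If `X` has no morphisms to `Σʲ M` for `j ≥ a`, it has none to `Perp M a`: successive
approximations push a morphism into `Perp M K` with `K` arbitrarily large. -/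
lemma homZero_of_perp {M : C} (hM : IsSilting M) {X : C} {a : ℤ}
    (hX : ∀ j, a ≤ j → HomZero X (M⟦j⟧)) {Y : C} (hY : Perp M a Y) : HomZero X Y := by
  obtain ⟨K, hK⟩ := exists_bound hM X
  have key : ∀ (m : ℕ) (b : ℤ), a ≤ b → K ≤ b + m → ∀ Y, Perp M b Y → HomZero X Y := by
    intro m
    induction m with
    | zero => exact fun b _ hb Y hY => hK Y (hY.mono (by simpa using hb))
    | succ m ih =>
      intro b hab hb Y hY f
      obtain ⟨P, hP, Y', u, g, h, hT, hY'⟩ := exists_approx_s1 hM hY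
      obtain ⟨s, rfl⟩ := lift₂ hT f
        (ih (b + 1) (by lia) (by push_cast at hb; lia) Y' hY' _)
      rw [(hX b hab).to_addOf hP s]
      rw [zero_comp]
  exact key (K - a).toNat a le_rfl (by have := Int.self_le_toNat (K - a); lia) Y hY

/-! ### Characterisation of `n`-term objects -/

/-- The product `Σᵃ add M ∗ ⋯ ∗ Σᵃ⁺ⁿ⁻¹ add M`. -/
def termSet (M : C) : ℤ → ℕ → Set C
  | _, 0 => {X | IsZero X}
  | a, n + 1 => star (shiftSet (addOf M) a) (termSet M (a + 1) n)

lemma starList_eq_termSet (M : C) (n : ℕ) (a : ℤ) :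
    starList ((List.range n).map fun i : ℕ => shiftSet (addOf M) (a + (i : ℤ))) = termSet M a n := by
  induction n generalizing a with
  | zero => rfl
  | succ n ih =>
    rw [List.range_succ_eq_map, List.map_cons, List.map_map]
    simp only [starList, termSet, ← ih]
    simp only [Nat.cast_zero, add_zero]
    congr 3
    funext i
    simp only [Function.comp_apply, Nat.cast_succ]
    congr 1
    ring

lemma termSet_vanishing {M : C} (hM : IsSilting M) (n : ℕ) (a : ℤ) (X : C)
    (h : X ∈ termSet M a n) :
    Perp M a X ∧ ∀ j, a + n ≤ j → HomZero X (M⟦j⟧) := by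
  induction n generalizing a X with
  | zero => exact ⟨fun i _ => homZero_of_isZero_right h _, fun j _ => homZero_of_isZero_left h _⟩
  | succ n ih =>
    obtain ⟨P, Y, f, g, h, hT, hP, hY⟩ := h
    rw [shiftSet_addOf] at hP
    obtain ⟨hY₁, hY₂⟩ := ih _ _ hY
    refine ⟨fun i hi x => ?_, fun j hj x => ?_⟩
    · obtain ⟨y, rfl⟩ := lift₂ hT x (hY₁ i (by lia) _)
      rw [(hM.homZero hi).to_addOf hP y]
      rw [zero_comp]
    · push_cast at hj
      obtain ⟨y, rfl⟩ := desc₂ hT x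
        ((hM.homZero (by lia : a < j)).from_addOf hP _)
      rw [hY₂ j (by lia) y]
      rw [comp_zero]

lemma mem_termSet_of_vanishing {M : C} (hM : IsSilting M) (n : ℕ) (a : ℤ) (X : C)
    (h₁ : Perp M a X) (h₂ : ∀ j, a + n ≤ j → HomZero X (M⟦j⟧)) : X ∈ termSet M a n := by
  induction n generalizing a X with
  | zero =>
    refine (IsZero.iff_id_eq_zero X).2 (homZero_of_perp hM (fun j hj => h₂ j ?_) h₁ _)
    simpa using hj
  | succ n ih =>
    obtain ⟨P, hP, Y, f, g, h, hT, hY⟩ := exists_approx_s1 hM h₁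
    rcases n with _ | n
    · -- In the one-term case `X ⟶ Y` vanishes, so that `X` is a summand of `P`.
      have hg : g = 0 := homZero_of_perp hM (fun j hj => h₂ j (by simpa using hj)) hY g
      obtain ⟨i, hi⟩ := lift₂ hT (𝟙 X) (by rw [hg, comp_zero])
      refine ⟨X, _, 𝟙 X, 0, 0, contractible_distinguished X, ?_, isZero_zero C⟩
      rw [shiftSet_addOf]
      exact retract_mem_addOf hP i f hi.symm
    · refine ⟨P, Y, f, g, h, hT, by rwa [shiftSet_addOf], ih _ _ hY fun j hj y => ?_⟩
      push_cast at hj h₂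
      obtain ⟨z, rfl⟩ := desc₃ hT y (h₂ j (by lia) _)
      have : HomZero (P⟦(1 : ℤ)⟧) (M⟦j⟧) :=
        ((hM.homZero (by lia : a + 1 < j)).of_iso
          ((shiftFunctorAdd' C a 1 (a + 1) rfl).app M) (Iso.refl _)).from_addOf
          (shift_mem_addOf hP 1)
      rw [this z]
      rw [comp_zero]

/-- `X` is `n`-term with respect to a silting object `M` iff `Hom(M, Σᵏ X) = 0` for `k > 0` and
`Hom(X, Σᵏ M) = 0` for `k ≥ n`. -/
lemma isNTermWrt_iff {M : C} (hM : IsSilting M) (n : ℕ) (X : C) :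
    IsNTermWrt n M X ↔ Perp M 0 X ∧ ∀ j : ℤ, n ≤ j → HomZero X (M⟦j⟧) := by
  have h : IsNTermWrt n M X ↔ X ∈ termSet M 0 n := by
    rw [← starList_eq_termSet]
    -- The index set in the definition is the list of integers obtained from `List.range n`.
    simp [IsNTermWrt, Function.comp_def, ← List.map_eq_flatMap]
  rw [h]
  constructor
  · intro h
    simpa using termSet_vanishing hM n 0 X h
  · rintro ⟨h₁, h₂⟩
    exact mem_termSet_of_vanishing hM n 0 X h₁ (by simpa using h₂)

/-- for silting objects `M` and `N` and `n ≥ 1`, `N` is `n`-term with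
respect to `M` iff `Σⁿ⁻¹ M` is `n`-term with respect to `N`. -/
theorem nterm_silting_symmetry (M N : C) (hM : IsSilting M) (hN : IsSilting N)
    (n : ℕ) (hn : 1 ≤ n) :
    IsNTermWrt n M N ↔ IsNTermWrt n N (M⟦(n : ℤ) - 1⟧) := by
  rw [isNTermWrt_iff hM, isNTermWrt_iff hN]
  constructor
  · rintro ⟨h₁, h₂⟩
    refine ⟨fun i hi => ?_, fun j hj => ?_⟩
    · exact (homZero_shift_zero_iff.2 (h₂ ((n : ℤ) - 1 - i) (by lia))).shift_congr _ _ (by lia)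
    · have h := (h₁ ((n : ℤ) - 1 - j) (by lia)).of_iso (Iso.refl _)
        ((shiftFunctorZero C ℤ).app N).symm
      exact h.shift_congr _ _ (by lia)
  · rintro ⟨h₁, h₂⟩
    refine ⟨fun i hi => ?_, fun j hj => ?_⟩
    · have h := (h₂ ((n : ℤ) - 1 - i) (by lia)).shift_congr i 0 (by lia)
      exact h.of_iso (Iso.refl _) ((shiftFunctorZero C ℤ).app N)
    · exact homZero_shift_zero_iff.1 ((h₁ ((n : ℤ) - 1 - j) (by lia)).shift_congr _ _ (by lia))

end Silting
end

section
/- Let 𝒟 be a triangulated category with shift functor Σ and let (𝒟^{≤0}, 𝒟^{≥0}) be a bounded t-structure on 𝒟 with heart 𝒜. Call a t-structure (𝒟′^{≤0}, 𝒟′^{≥0}) intermediate if 𝒟^{≤−1} ⊆ 𝒟′^{≤0} ⊆ 𝒟^{≤0}. Then for every intermediate t-structure (𝒟′^{≤0}, 𝒟′^{≥0}), the pair (𝒟′^{≤0} ∩ 𝒜, 𝒟′^{≥1} ∩ 𝒜) is a torsion pair of the abelian category 𝒜, and the assignment (𝒟′^{≤0}, 𝒟′^{≥0}) ↦ (𝒟′^{≤0}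 ∩ 𝒜, 𝒟′^{≥1} ∩ 𝒜) is a bijection from the set of intermediate t-structures on 𝒟 onto the set of torsion pairs of 𝒜. -/
/-!
The argument is the Happel–Reiten–Smalø tilt, carried out so that it only uses the long exact
`Hom` sequences of distinguished triangles; the octahedral axiom is never needed.

* If `(𝒟'^{≤0}, 𝒟'^{≥0})` is intermediate, then `𝒟^{≥1} ⊆ 𝒟'^{≥1} ⊆ 𝒟^{≥0}`. For `X` in the heart
  `𝒜`, the truncation triangle `M ⟶ X ⟶ N ⟶ M⟦1⟧` of `X` for the intermediate t-structure
  has `M ∈ 𝒟^{≤0}` and `N ∈ 𝒟^{≥0}`; closure of `𝒟^{≤0}` and `𝒟^{≥0}` under extensions puts both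
  `M` and `N` in `𝒜` (`torsionPair_of_intermediate`).
* Given a torsion pair `(𝒯, ℱ)` of `𝒜`, the aisle of the tilted t-structure is
  `𝒟^{≤0} ∩ ⊥ℱ` (`tiltLE`), that is, the objects `X ∈ 𝒟^{≤0}` with `H⁰(X) ∈ 𝒯`, and the coaisle is
  determined by orthogonality (`coaisle`). To truncate `Z`, take the truncation
  `X ⟶ Z ⟶ Y` with respect to `𝒟` and let `X'` be the fibre of
  `X ⟶ H⁰(X) ⟶ F`, where `F` is the torsion-free quotient of `H⁰(X)`. The point is that `X'` lies
  in the tilted aisle (`hom_fibre_eq_zero`) and that the cone of `X' ⟶ X ⟶ Z` is right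
  orthogonal to it (`hom_cone_eq_zero`).
* An intermediate t-structure with torsion pair `(𝒯, ℱ)` has aisle `𝒟^{≤0} ∩ ⊥ℱ`
  (`eq_tiltLE`), and a t-structure is determined by its aisle (`eq_coaisle`).
-/

open CategoryTheory Limits Pretriangulated

namespace Silting

variable {C : Type*} [Category C] [HasZeroObject C] [Preadditive C] [HasShift C ℤ]
  [∀ n : ℤ, (shiftFunctor C n).Additive] [Pretriangulated C]

/-- A t-structure on `C`, given by the pair `(𝒟^{≤0}, 𝒟^{≥0})`. -/
structure IsTStructure (Dle Dge : Set C) : Prop where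
  mem_of_iso_le : ∀ ⦃X Y : C⦄, (X ≅ Y) → X ∈ Dle → Y ∈ Dle
  mem_of_iso_ge : ∀ ⦃X Y : C⦄, (X ≅ Y) → X ∈ Dge → Y ∈ Dge
  shift_le : ∀ X ∈ Dle, X⟦(1 : ℤ)⟧ ∈ Dle
  shift_ge : ∀ X ∈ Dge, X⟦(-1 : ℤ)⟧ ∈ Dge
  hom_zero : ∀ X ∈ Dle, ∀ Y : C, Y⟦(1 : ℤ)⟧ ∈ Dge → ∀ f : X ⟶ Y, f = 0
  exists_triangle : ∀ Z : C, ∃ (X Y : C) (f : X ⟶ Z) (g : Z ⟶ Y) (h : Y ⟶ X⟦(1 : ℤ)⟧),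
    (Triangle.mk f g h ∈ distTriang C) ∧ X ∈ Dle ∧ Y⟦(1 : ℤ)⟧ ∈ Dge

/-- Boundedness of a t-structure: `⋃ᵢ 𝒟^{≤i} = 𝒟 = ⋃ᵢ 𝒟^{≥i}`, where
`X ∈ 𝒟^{≤i} ↔ X⟦i⟧ ∈ 𝒟^{≤0}` and `X ∈ 𝒟^{≥i} ↔ X⟦i⟧ ∈ 𝒟^{≥0}`. -/
def IsBoundedTStructure (Dle Dge : Set C) : Prop :=
  ∀ X : C, (∃ n : ℤ, X⟦n⟧ ∈ Dle) ∧ (∃ m : ℤ, X⟦m⟧ ∈ Dge)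

/-- `(𝒟'^{≤0}, 𝒟'^{≥0})` is intermediate with respect to `(𝒟^{≤0}, 𝒟^{≥0})`:
`𝒟^{≤-1} ⊆ 𝒟'^{≤0} ⊆ 𝒟^{≤0}`. -/
def IsIntermediate (Dle Dle' : Set C) : Prop :=
  (∀ X : C, X⟦(-1 : ℤ)⟧ ∈ Dle → X ∈ Dle') ∧ Dle' ⊆ Dle

/-- A torsion pair `(𝒯, ℱ)` of the heart `HA` of a t-structure (short exact sequences
in the heart being encoded by distinguished triangles with all three vertices in the
heart). -/
structure IsHeartTorsionPair (HA 𝒯 ℱ : Set C) : Prop where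
  subset_t : 𝒯 ⊆ HA
  subset_f : ℱ ⊆ HA
  mem_of_iso_t : ∀ ⦃X Y : C⦄, (X ≅ Y) → X ∈ 𝒯 → Y ∈ 𝒯
  mem_of_iso_f : ∀ ⦃X Y : C⦄, (X ≅ Y) → X ∈ ℱ → Y ∈ ℱ
  hom_zero : ∀ M ∈ 𝒯, ∀ N ∈ ℱ, ∀ f : M ⟶ N, f = 0
  exists_triangle : ∀ X ∈ HA, ∃ (M N : C) (f : M ⟶ X) (g : X ⟶ N) (h : N ⟶ M⟦(1 : ℤ)⟧),
    (Triangle.mk f g h ∈ distTriang C) ∧ M ∈ 𝒯 ∧ N ∈ ℱ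

/-! ### Exact sequences of a distinguished triangle -/

section ExactSequences

variable {X Y Z : C} {f : X ⟶ Y} {g : Y ⟶ Z} {k : Z ⟶ X⟦(1 : ℤ)⟧}
  (hT : Triangle.mk f g k ∈ distTriang C)
include hT

lemma exists_desc₂ {W : C} (φ : Y ⟶ W) (hφ : f ≫ φ = 0) : ∃ ψ : Z ⟶ W, φ = g ≫ ψ :=
  Triangle.yoneda_exact₂ _ hT φ hφ

lemma exists_desc₃ {W : C} (φ : Z ⟶ W) (hφ : g ≫ φ = 0) : ∃ ψ : X⟦(1 : ℤ)⟧ ⟶ W, φ = k ≫ ψ :=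
  Triangle.yoneda_exact₃ _ hT φ hφ

lemma exists_desc₁ {W : C} (φ : X ⟶ W) (hφ : k ≫ φ⟦(1 : ℤ)⟧' = 0) : ∃ ψ : Y ⟶ W, φ = f ≫ ψ := by
  obtain ⟨b, hb⟩ : ∃ b : Y⟦(1 : ℤ)⟧ ⟶ W⟦(1 : ℤ)⟧, φ⟦(1 : ℤ)⟧' = (-f⟦(1 : ℤ)⟧') ≫ b :=
    Triangle.yoneda_exact₃ _ (rot_of_distTriang _ hT) (φ⟦(1 : ℤ)⟧') hφ
  obtain ⟨c, rfl⟩ := (shiftFunctor C (1 : ℤ)).map_surjective b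
  refine ⟨-c, (shiftFunctor C (1 : ℤ)).map_injective ?_⟩
  simp [hb]

lemma exists_lift₁ {W : C} (φ : W ⟶ X⟦(1 : ℤ)⟧) (hφ : φ ≫ f⟦(1 : ℤ)⟧' = 0) :
    ∃ ψ : W ⟶ Z, φ = ψ ≫ k :=
  Triangle.coyoneda_exact₁ _ hT φ hφ

lemma exists_lift₂ {W : C} (φ : W ⟶ Y) (hφ : φ ≫ g = 0) : ∃ ψ : W ⟶ X, φ = ψ ≫ f :=
  Triangle.coyoneda_exact₂ _ hT φ hφ

lemma exists_lift₃ {W : C} (φ : W ⟶ Z) (hφ : φ ≫ k = 0) : ∃ ψ : W ⟶ Y, φ = ψ ≫ g :=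
  Triangle.coyoneda_exact₃ _ hT φ hφ

/-- If `Y ⟶ Z` vanishes, then `Z` is a direct summand of `X⟦1⟧`; so it is zero as soon as there are
no nonzero morphisms `X⟦1⟧ ⟶ Z`, and then `X ⟶ Y` is an isomorphism. -/
lemma isIso_of_hom_zero₁₃ (hg : g = 0) (hZ : ∀ φ : X⟦(1 : ℤ)⟧ ⟶ Z, φ = 0) : IsIso f := by
  obtain ⟨b, hb⟩ := exists_desc₃ hT (𝟙 Z) (by rw [hg, zero_comp])
  refine (Triangle.isZero₃_iff_isIso₁ _ hT).1 ((IsZero.iff_id_eq_zero Z).2 ?_)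
  rw [hb, hZ b, comp_zero]

/-- If `X ⟶ Y` vanishes, then `X` is a direct summand of `Z⟦-1⟧`; so it is zero as soon as there are
no nonzero morphisms `X ⟶ Z⟦-1⟧`, and then `Y ⟶ Z` is an isomorphism. -/
lemma isIso_of_hom_zero₃₁ (hf : f = 0) (hX : ∀ φ : X ⟶ Z⟦(-1 : ℤ)⟧, φ = 0) : IsIso g := by
  obtain ⟨b, c, hbc⟩ : ∃ (b : X ⟶ Z⟦(-1 : ℤ)⟧) (c : Z⟦(-1 : ℤ)⟧ ⟶ X), 𝟙 X = b ≫ c :=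
    let ⟨b, hb⟩ := Triangle.coyoneda_exact₂ _ (inv_rot_of_distTriang _ hT) (𝟙 X)
      (show 𝟙 X ≫ f = 0 by rw [hf, comp_zero])
    ⟨b, _, hb⟩
  refine (Triangle.isZero₁_iff_isIso₂ _ hT).1 ((IsZero.iff_id_eq_zero X).2 ?_)
  rw [hbc, hX b, zero_comp]

end ExactSequences

/-! ### Aisles, coaisles and Mathlib t-structures -/

/-- The coaisle `𝒟^{≥0}` determined by an aisle `S = 𝒟^{≤0}`: the objects `Y` such that `Y⟦-1⟧` is
right orthogonal to `S`. -/
def coaisle (S : Set C) : Set C :=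
  {Y | ∀ X ∈ S, ∀ f : X ⟶ Y⟦(-1 : ℤ)⟧, f = 0}

omit [HasZeroObject C] [∀ n : ℤ, (shiftFunctor C n).Additive] [Pretriangulated C] in
lemma shift_one_mem_coaisle_iff (S : Set C) (Y : C) :
    Y⟦(1 : ℤ)⟧ ∈ coaisle S ↔ ∀ X ∈ S, ∀ f : X ⟶ Y, f = 0 := by
  let e : Y⟦(1 : ℤ)⟧⟦(-1 : ℤ)⟧ ≅ Y := (shiftFunctorCompIsoId C 1 (-1) (by simp)).app Y
  refine ⟨fun hY X hX f => ?_, fun hY X hX f => ?_⟩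
  · have := hY X hX (f ≫ e.inv)
    rwa [← cancel_mono e.inv, zero_comp]
  · have := hY X hX (f ≫ e.hom)
    rwa [← cancel_mono e.hom, zero_comp]

/-- The Mathlib t-structure attached to a pair `(𝒟^{≤0}, 𝒟^{≥0})`. -/
def IsTStructure.toT {Dle Dge : Set C} (h : IsTStructure Dle Dge) : Triangulated.TStructure C where
  le n := fun X => X⟦n⟧ ∈ Dle
  ge n := fun X => X⟦n⟧ ∈ Dge
  le_isClosedUnderIsomorphisms n :=
    ⟨fun e hX => h.mem_of_iso_le ((shiftFunctor C n).mapIso e) hX⟩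
  ge_isClosedUnderIsomorphisms n :=
    ⟨fun e hX => h.mem_of_iso_ge ((shiftFunctor C n).mapIso e) hX⟩
  le_shift n a n' hn X hX := h.mem_of_iso_le ((shiftFunctorAdd' C a n' n hn).app X) hX
  ge_shift n a n' hn X hX := h.mem_of_iso_ge ((shiftFunctorAdd' C a n' n hn).app X) hX
  zero' X Y f hX hY :=
    h.hom_zero X (h.mem_of_iso_le ((shiftFunctorZero C ℤ).app X) hX) Y hY f
  le_zero_le X hX :=
    h.mem_of_iso_le ((shiftFunctorAdd' C 0 1 1 (by simp)).symm.app X) (h.shift_le _ hX)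
  ge_one_le X hX :=
    h.mem_of_iso_ge ((shiftFunctorAdd' C 1 (-1) 0 (by simp)).symm.app X) (h.shift_ge _ hX)
  exists_triangle_zero_one Z := by
    obtain ⟨X, Y, f, g, k, hT, hX, hY⟩ := h.exists_triangle Z
    exact ⟨X, Y, h.mem_of_iso_le ((shiftFunctorZero C ℤ).symm.app X) hX, hY, f, g, k, hT⟩

namespace IsTStructure

variable {Dle Dge : Set C} (h : IsTStructure Dle Dge)
include h

lemma isLE_zero_iff (X : C) : h.toT.IsLE X 0 ↔ X ∈ Dle :=
  ⟨fun hX => h.mem_of_iso_le ((shiftFunctorZero C ℤ).app X) hX.le,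
    fun hX => ⟨h.mem_of_iso_le ((shiftFunctorZero C ℤ).symm.app X) hX⟩⟩

lemma isGE_zero_iff (X : C) : h.toT.IsGE X 0 ↔ X ∈ Dge :=
  ⟨fun hX => h.mem_of_iso_ge ((shiftFunctorZero C ℤ).app X) hX.ge,
    fun hX => ⟨h.mem_of_iso_ge ((shiftFunctorZero C ℤ).symm.app X) hX⟩⟩

lemma isLE_neg_one_iff (X : C) : h.toT.IsLE X (-1) ↔ X⟦(-1 : ℤ)⟧ ∈ Dle :=
  ⟨fun hX => hX.le, fun hX => ⟨hX⟩⟩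

lemma isGE_one_iff (X : C) : h.toT.IsGE X 1 ↔ X⟦(1 : ℤ)⟧ ∈ Dge :=
  ⟨fun hX => hX.ge, fun hX => ⟨hX⟩⟩

lemma mem_heart_iff (X : C) : X ∈ Dle ∩ Dge ↔ h.toT.IsLE X 0 ∧ h.toT.IsGE X 0 := by
  rw [h.isLE_zero_iff, h.isGE_zero_iff]
  exact Iff.rfl

/-- A t-structure is determined by its aisle. -/
lemma eq_coaisle : Dge = coaisle Dle := by
  ext Y
  rw [← h.isGE_zero_iff, ← h.toT.isGE_shift_iff Y 0 (-1) 1,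
    h.toT.isGE_iff_orthogonal 0 1 (by simp)]
  refine ⟨fun hY X hX f => hY X f ((h.isLE_zero_iff X).2 hX),
    fun hY X f hX => hY X ((h.isLE_zero_iff X).1 hX) f⟩

end IsTStructure

/-! ### From intermediate t-structures to torsion pairs -/

section Intermediate

variable {Dle Dge Dle' Dge' : Set C} (h : IsTStructure Dle Dge) (h' : IsTStructure Dle' Dge')
  (hi : IsIntermediate Dle Dle')
include h h' hi

lemma isLE_of_intermediate (X : C) (hX : h'.toT.IsLE X 0) : h.toT.IsLE X 0 :=
  (h.isLE_zero_iff X).2 (hi.2 ((h'.isLE_zero_iff X).1 hX))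

lemma isLE'_of_intermediate (X : C) (hX : h.toT.IsLE X (-1)) : h'.toT.IsLE X 0 :=
  (h'.isLE_zero_iff X).2 (hi.1 X ((h.isLE_neg_one_iff X).1 hX))

lemma isGE_of_intermediate (Y : C) (hY : h'.toT.IsGE Y 1) : h.toT.IsGE Y 0 := by
  rw [h.toT.isGE_iff_orthogonal (-1) 0 (by simp)]
  intro X f hX
  exact h'.toT.zero_of_isLE_of_isGE f 0 1 (by simp) (isLE'_of_intermediate h h' hi X hX) hY

lemma torsionPair_of_intermediate :
    IsHeartTorsionPair (Dle ∩ Dge) (Dle' ∩ (Dle ∩ Dge))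
      ({Y : C | Y⟦(1 : ℤ)⟧ ∈ Dge'} ∩ (Dle ∩ Dge)) where
  subset_t := Set.inter_subset_right
  subset_f := Set.inter_subset_right
  mem_of_iso_t _ _ e hX :=
    ⟨h'.mem_of_iso_le e hX.1, h.mem_of_iso_le e hX.2.1, h.mem_of_iso_ge e hX.2.2⟩
  mem_of_iso_f _ _ e hX :=
    ⟨h'.mem_of_iso_ge ((shiftFunctor C (1 : ℤ)).mapIso e) hX.1, h.mem_of_iso_le e hX.2.1,
      h.mem_of_iso_ge e hX.2.2⟩
  hom_zero M hM N hN f := h'.hom_zero M hM.1 N hN.1 f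
  exists_triangle X hX := by
    obtain ⟨M, N, f, g, k, hT, hM, hN⟩ := h'.exists_triangle X
    obtain ⟨hX0, hX1⟩ := (h.mem_heart_iff X).1 hX
    have hM0 : h.toT.IsLE M 0 := (h.isLE_zero_iff M).2 (hi.2 hM)
    have hN1 : h.toT.IsGE N 0 := isGE_of_intermediate h h' hi N ((h'.isGE_one_iff N).2 hN)
    have hM' : h.toT.IsLE (M⟦(1 : ℤ)⟧) 0 := by
      have := h.toT.isLE_shift M 0 1 (-1)
      exact h.toT.isLE_of_le _ (-1) 0
    have hN' : h.toT.IsGE (N⟦(-1 : ℤ)⟧) 0 := by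
      have := h.toT.isGE_shift N 0 (-1) 1
      exact h.toT.isGE_of_ge _ 0 1
    have hN0 : h.toT.IsLE N 0 := h.toT.isLE₂ _ (rot_of_distTriang _ hT) 0 hX0 hM'
    have hM1 : h.toT.IsGE M 0 := h.toT.isGE₂ _ (inv_rot_of_distTriang _ hT) 0 hN' hX1
    exact ⟨M, N, f, g, k, hT, ⟨hM, (h.mem_heart_iff M).2 ⟨hM0, hM1⟩⟩,
      ⟨hN, (h.mem_heart_iff N).2 ⟨hN0, hN1⟩⟩⟩

end Intermediate

/-! ### Tilting at a torsion pair -/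

/-- The aisle of the tilt at a torsion pair with torsion-free class `ℱ`: the objects of `𝒟^{≤0}`
that are left orthogonal to `ℱ` (equivalently, those whose `H⁰` is torsion). -/
def tiltLE (Dle ℱ : Set C) : Set C :=
  {X | X ∈ Dle ∧ ∀ N ∈ ℱ, ∀ f : X ⟶ N, f = 0}

/-- Let `H` be the cone of a morphism `A ⟶ X` with `A ∈ 𝒟^{≤-1}`, let `M ⟶ H ⟶ F` be distinguished
and let `X'` be the fibre of `X ⟶ H ⟶ F`. If `V ∈ 𝒟^{≥0}` receives no nonzero morphism from `M`,
then it receives none from `X'`. -/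
lemma hom_fibre_eq_zero (t : Triangulated.TStructure C) {A X H M F X' V : C}
    {a : A ⟶ X} {p : X ⟶ H} {a' : H ⟶ A⟦(1 : ℤ)⟧} (hA : Triangle.mk a p a' ∈ distTriang C)
    {i : M ⟶ H} {q : H ⟶ F} {i' : F ⟶ M⟦(1 : ℤ)⟧} (hM : Triangle.mk i q i' ∈ distTriang C)
    {u : X' ⟶ X} {k : F ⟶ X'⟦(1 : ℤ)⟧} (hX' : Triangle.mk u (p ≫ q) k ∈ distTriang C)
    (hA0 : t.IsLE A (-1)) (hV : t.IsGE V 0) (hMV : ∀ f : M ⟶ V, f = 0) (f : X' ⟶ V) : f = 0 := by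
  have hpqk : (p ≫ q) ≫ k = 0 := comp_distTriang_mor_zero₂₃ _ hX'
  have hupq : u ≫ p ≫ q = 0 := comp_distTriang_mor_zero₁₂ _ hX'
  have hA1 : t.IsLE (A⟦(1 : ℤ)⟧) (-2) := t.isLE_shift A (-1) 1 (-2)
  have hV1 : t.IsGE (V⟦(1 : ℤ)⟧) (-1) := t.isGE_shift V 0 1 (-1)
  -- The restriction map `Hom(F, V⟦1⟧) ⟶ Hom(X, V⟦1⟧)` is injective, whence `f` extends to `X`.
  have h1 : q ≫ k ≫ f⟦(1 : ℤ)⟧' = 0 := by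
    obtain ⟨b, hb⟩ := exists_desc₃ hA (q ≫ k ≫ f⟦(1 : ℤ)⟧')
      (by simpa only [Category.assoc, zero_comp] using hpqk =≫ f⟦(1 : ℤ)⟧')
    rw [hb, t.zero_of_isLE_of_isGE b (-2) (-1) (by simp) hA1 hV1, comp_zero]
  have h2 : k ≫ f⟦(1 : ℤ)⟧' = 0 := by
    obtain ⟨b, hb⟩ := exists_desc₃ hM (k ≫ f⟦(1 : ℤ)⟧') h1
    obtain ⟨c, rfl⟩ := (shiftFunctor C (1 : ℤ)).map_surjective b
    rw [hb, hMV c, Functor.map_zero, comp_zero]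
  obtain ⟨c, rfl⟩ := exists_desc₁ hX' f h2
  -- Every morphism `X ⟶ V` factors through `X ⟶ F`, hence vanishes on `X'`.
  obtain ⟨d, rfl⟩ := exists_desc₂ hA c (t.zero_of_isLE_of_isGE _ (-1) 0 (by simp) hA0 hV)
  obtain ⟨e, rfl⟩ := exists_desc₂ hM d (hMV _)
  simpa only [Category.assoc, zero_comp] using hupq =≫ e

/-- Let `X ⟶ Z ⟶ Y` be distinguished and let `X'` be the fibre of a morphism `X ⟶ F`. An object `U`
with no nonzero morphisms to `F` and `Y` has none to the cone of `X' ⟶ X ⟶ Z` either. -/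
lemma hom_cone_eq_zero {X Z Y F X' Y' U : C}
    {s : X ⟶ Z} {r : Z ⟶ Y} {s' : Y ⟶ X⟦(1 : ℤ)⟧} (hZ : Triangle.mk s r s' ∈ distTriang C)
    {u : X' ⟶ X} {g : X ⟶ F} {k : F ⟶ X'⟦(1 : ℤ)⟧} (hX' : Triangle.mk u g k ∈ distTriang C)
    {r' : Z ⟶ Y'} {l : Y' ⟶ X'⟦(1 : ℤ)⟧} (hY' : Triangle.mk (u ≫ s) r' l ∈ distTriang C)
    (hUF : ∀ f : U ⟶ F, f = 0) (hUY : ∀ f : U ⟶ Y, f = 0) (f : U ⟶ Y') : f = 0 := by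
  have hl : l ≫ (u ≫ s)⟦(1 : ℤ)⟧' = 0 := comp_distTriang_mor_zero₃₁ _ hY'
  have hr : (u ≫ s) ≫ r' = 0 := comp_distTriang_mor_zero₁₂ _ hY'
  have h1 : (f ≫ l) ≫ u⟦(1 : ℤ)⟧' = 0 := by
    obtain ⟨b, hb⟩ := exists_lift₁ hZ ((f ≫ l) ≫ u⟦(1 : ℤ)⟧')
      (by simpa only [Category.assoc, Functor.map_comp, comp_zero] using f ≫= hl)
    rw [hb, hUY b, zero_comp]
  have h2 : f ≫ l = 0 := by
    obtain ⟨b, hb⟩ := exists_lift₁ hX' (f ≫ l) h1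
    rw [hb, hUF b, zero_comp]
  obtain ⟨b, rfl⟩ := exists_lift₃ hY' f h2
  obtain ⟨c, rfl⟩ := exists_lift₂ hZ b (hUY _)
  obtain ⟨d, rfl⟩ := exists_lift₂ hX' c (hUF _)
  simpa only [Category.assoc, comp_zero] using d ≫= hr

section Tilt

variable {Dle Dge 𝒯 ℱ : Set C} (h : IsTStructure Dle Dge)
  (hp : IsHeartTorsionPair (Dle ∩ Dge) 𝒯 ℱ)
include h hp

lemma mem_tiltLE_of_isLE_neg_one (X : C) (hX : h.toT.IsLE X (-1)) : X ∈ tiltLE Dle ℱ :=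
  ⟨(h.isLE_zero_iff X).1 (h.toT.isLE_of_le X (-1) 0), fun N hN f =>
    h.toT.zero_of_isLE_of_isGE f (-1) 0 (by simp) hX ((h.mem_heart_iff N).1 (hp.subset_f hN)).2⟩

lemma isIntermediate_tiltLE : IsIntermediate Dle (tiltLE Dle ℱ) :=
  ⟨fun X hX => mem_tiltLE_of_isLE_neg_one h hp X ((h.isLE_neg_one_iff X).2 hX), fun _ hX => hX.1⟩

lemma isTStructure_tilt : IsTStructure (tiltLE Dle ℱ) (coaisle (tiltLE Dle ℱ)) := by
  have shift_mem : ∀ X ∈ tiltLE Dle ℱ, X⟦(1 : ℤ)⟧ ∈ tiltLE Dle ℱ := fun X hX => by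
    have := (h.isLE_zero_iff X).2 hX.1
    exact mem_tiltLE_of_isLE_neg_one h hp _ (h.toT.isLE_shift X 0 1 (-1))
  refine ⟨fun X Y e hX => ⟨h.mem_of_iso_le e hX.1, fun N hN f => ?_⟩, fun X Y e hX U hU f => ?_,
    shift_mem, fun Y hY U hU f => ?_, fun X hX Y hY f => ?_, fun Z => ?_⟩
  · rw [← cancel_epi e.hom, hX.2 N hN (e.hom ≫ f), comp_zero]
  · rw [← cancel_mono ((shiftFunctor C (-1 : ℤ)).mapIso e).inv, zero_comp]
    exact hX U hU _
  · let e := (shiftFunctorCompIsoId C (-1 : ℤ) 1 (by simp)).app (Y⟦(-1 : ℤ)⟧)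
    apply (shiftFunctor C (1 : ℤ)).map_injective
    have := hY _ (shift_mem U hU) (f⟦(1 : ℤ)⟧' ≫ e.hom)
    rw [Functor.map_zero, ← cancel_mono e.hom, this, zero_comp]
  · exact (shift_one_mem_coaisle_iff _ Y).1 hY X hX f
  · obtain ⟨X, Y, s, r, s', hZ, hX, hY⟩ := h.exists_triangle Z
    have hX0 := (h.isLE_zero_iff X).2 hX
    obtain ⟨A, H, hA, hH, a, p, a', hT⟩ := h.toT.exists_triangle X (-1) 0 (by simp)
    have hA0 : h.toT.IsLE A (-1) := ⟨hA⟩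
    have hA1 : h.toT.IsLE (A⟦(1 : ℤ)⟧) 0 := by
      have := h.toT.isLE_shift A (-1) 1 (-2)
      exact h.toT.isLE_of_le _ (-2) 0
    have hH0 : h.toT.IsLE H 0 := h.toT.isLE₂ _ (rot_of_distTriang _ hT) 0 hX0 hA1
    obtain ⟨M, F, i, q, i', hT', hM, hF⟩ :=
      hp.exists_triangle H ((h.mem_heart_iff H).2 ⟨hH0, ⟨hH⟩⟩)
    obtain ⟨X', u, k, hX'⟩ := distinguished_cocone_triangle₁ (p ≫ q)
    obtain ⟨Y', r', l, hY'⟩ := distinguished_cocone_triangle (u ≫ s)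
    have hM0 := ((h.mem_heart_iff M).1 (hp.subset_t hM)).1
    refine ⟨X', Y', u ≫ s, r', l, hY', ⟨?_, fun N hN => ?_⟩, ?_⟩
    · rw [← h.isLE_zero_iff, h.toT.isLE_iff_orthogonal 0 1 (by simp)]
      intro V f hV
      exact hom_fibre_eq_zero h.toT hT hT' hX' hA0 (h.toT.isGE_of_ge V 0 1)
        (fun b => h.toT.zero_of_isLE_of_isGE b 0 1 (by simp) hM0 hV) f
    · exact hom_fibre_eq_zero h.toT hT hT' hX' hA0 ((h.mem_heart_iff N).1 (hp.subset_f hN)).2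
        (hp.hom_zero M hM N hN)
    · rw [shift_one_mem_coaisle_iff]
      intro U hU
      exact hom_cone_eq_zero hZ hX' hY' (hU.2 F hF) (h.hom_zero U hU.1 Y hY)

lemma tiltLE_inter_heart : tiltLE Dle ℱ ∩ (Dle ∩ Dge) = 𝒯 := by
  ext X
  refine ⟨fun ⟨hX, hXA⟩ => ?_, fun hX => ⟨⟨(hp.subset_t hX).1, hp.hom_zero X hX⟩, hp.subset_t hX⟩⟩
  obtain ⟨M, N, f, g, k, hT, hM, hN⟩ := hp.exists_triangle X hXA
  have hM0 := ((h.mem_heart_iff M).1 (hp.subset_t hM)).1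
  have hM1 := h.toT.isLE_shift M 0 1 (-1)
  have hN0 := ((h.mem_heart_iff N).1 (hp.subset_f hN)).2
  have hg : g = 0 := hX.2 N hN g
  have : IsIso f := isIso_of_hom_zero₁₃ hT hg
    fun b => h.toT.zero_of_isLE_of_isGE b (-1) 0 (by simp) hM1 hN0
  exact hp.mem_of_iso_t (asIso f) hM

lemma coaisle_tiltLE_inter_heart :
    {Y : C | Y⟦(1 : ℤ)⟧ ∈ coaisle (tiltLE Dle ℱ)} ∩ (Dle ∩ Dge) = ℱ := by
  ext Y
  refine ⟨fun ⟨hY, hYA⟩ => ?_, fun hY => ⟨(shift_one_mem_coaisle_iff _ Y).2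
    fun X hX => hX.2 Y hY, hp.subset_f hY⟩⟩
  replace hY := (shift_one_mem_coaisle_iff _ Y).1 hY
  obtain ⟨M, N, f, g, k, hT, hM, hN⟩ := hp.exists_triangle Y hYA
  have hM0 := ((h.mem_heart_iff M).1 (hp.subset_t hM)).1
  have hN0 := ((h.mem_heart_iff N).1 (hp.subset_f hN)).2
  have hN1 := h.toT.isGE_shift N 0 (-1) 1
  have hf : f = 0 := hY M ⟨(hp.subset_t hM).1, hp.hom_zero M hM⟩ f
  have : IsIso g := isIso_of_hom_zero₃₁ hT hf
    fun b => h.toT.zero_of_isLE_of_isGE b 0 1 (by simp) hM0 hN1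
  exact hp.mem_of_iso_f (asIso g).symm hN

end Tilt

/-! ### Uniqueness -/

/-- An intermediate t-structure is the tilt at the torsion pair it induces on the heart. -/
lemma eq_tiltLE {Dle Dge Dle' Dge' : Set C} (h : IsTStructure Dle Dge)
    (h' : IsTStructure Dle' Dge') (hi : IsIntermediate Dle Dle') :
    Dle' = tiltLE Dle ({Y : C | Y⟦(1 : ℤ)⟧ ∈ Dge'} ∩ (Dle ∩ Dge)) := by
  ext X
  refine ⟨fun hX => ⟨hi.2 hX, fun N hN => h'.hom_zero X hX N hN.1⟩, fun hX => ?_⟩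
  obtain ⟨M, N, f, g, k, hT, hM, hN⟩ := h'.exists_triangle X
  have hM0 : h'.toT.IsLE M 0 := (h'.isLE_zero_iff M).2 hM
  have hM1 : h'.toT.IsLE (M⟦(1 : ℤ)⟧) 0 := by
    have := h'.toT.isLE_shift M 0 1 (-1)
    exact h'.toT.isLE_of_le _ (-1) 0
  have hN1 : h'.toT.IsGE N 1 := (h'.isGE_one_iff N).2 hN
  have hNle : h.toT.IsLE N 0 := h.toT.isLE₂ _ (rot_of_distTriang _ hT) 0
    ((h.isLE_zero_iff X).2 hX.1) (isLE_of_intermediate h h' hi _ hM1)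
  have hNge : h.toT.IsGE N 0 := isGE_of_intermediate h h' hi N hN1
  -- Thus `N` belongs to the torsion-free class, so that `X ⟶ N` vanishes.
  have hg : g = 0 := hX.2 N ⟨hN, (h.mem_heart_iff N).2 ⟨hNle, hNge⟩⟩ g
  have : IsIso f := isIso_of_hom_zero₁₃ hT hg
    fun b => h'.toT.zero_of_isLE_of_isGE b 0 1 (by simp) hM1 hN1
  exact h'.mem_of_iso_le (asIso f) hM

/-- for a bounded t-structure with heart `HA`, intersecting with the
heart gives a bijection from intermediate t-structures onto torsion pairs of the
heart. -/
theorem intermediate_tstructures_biject_with_torsion_pairs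
    (Dle Dge : Set C) (h : IsTStructure Dle Dge) (hb : IsBoundedTStructure Dle Dge) :
    (∀ Dle' Dge' : Set C, IsTStructure Dle' Dge' → IsIntermediate Dle Dle' →
      IsHeartTorsionPair (Dle ∩ Dge) (Dle' ∩ (Dle ∩ Dge))
        ({Y : C | Y⟦(1 : ℤ)⟧ ∈ Dge'} ∩ (Dle ∩ Dge))) ∧
    (∀ 𝒯 ℱ : Set C, IsHeartTorsionPair (Dle ∩ Dge) 𝒯 ℱ →
      ∃! p : Set C × Set C, (IsTStructure p.1 p.2 ∧ IsIntermediate Dle p.1) ∧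
        p.1 ∩ (Dle ∩ Dge) = 𝒯 ∧ ({Y : C | Y⟦(1 : ℤ)⟧ ∈ p.2} ∩ (Dle ∩ Dge)) = ℱ) := by
  refine ⟨fun Dle' Dge' h' hi => torsionPair_of_intermediate h h' hi, fun 𝒯 ℱ hp => ?_⟩
  refine ⟨(tiltLE Dle ℱ, coaisle (tiltLE Dle ℱ)),
    ⟨⟨isTStructure_tilt h hp, isIntermediate_tiltLE h hp⟩, tiltLE_inter_heart h hp,
      coaisle_tiltLE_inter_heart h hp⟩, ?_⟩
  rintro ⟨Dle', Dge'⟩ ⟨⟨h', hi⟩, -, hF⟩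
  dsimp only at h' hi hF
  have h1 : Dle' = tiltLE Dle ℱ := hF ▸ eq_tiltLE h h' hi
  have h2 : Dge' = coaisle (tiltLE Dle ℱ) := h1 ▸ h'.eq_coaisle
  rw [h1, h2]

end Silting
end
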